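/- arXiv:2504.06506 — 2 statements merged into one kernel-verified Lean document; each statement's English description precedes it below -/
import Mathlib

section
/- Let S be a densely defined, closed, symmetric operator in a complex Hilbert space H whose deficiency indices are finite and equal: n₊(S) = n₋(S) = n ∈ ℕ. Then for every m ∈ ℕ, m ≥ 1, the power S^m is densely defined, symmetric, and closed, and its deficiency indices satisfy n₊(S^m) = n₋(S^m) = m·n. -/
open scoped InnerProductSpace
open Cardinal

noncomputable section

variable {E F G H : Type*}
  [NormedAddCommGroup E] [InnerProductSpace ℂ E] [CompleteSpace E]
  [NormedAddCommGroup F] [InnerProductSpace ℂ F] [CompleteSpace F]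
  [NormedAddCommGroup G] [InnerProductSpace ℂ G] [CompleteSpace G]
  [NormedAddCommGroup H] [InnerProductSpace ℂ H] [CompleteSpace H]

/-- The product (composition) `T₂T₁` of two partially defined linear operators, with domain
`dom(T₂T₁) = {f ∈ dom T₁ | T₁ f ∈ dom T₂}` and value `(T₂T₁) f = T₂ (T₁ f)`. -/
def pcomp {E F G : Type*}
    [NormedAddCommGroup E] [InnerProductSpace ℂ E]
    [NormedAddCommGroup F] [InnerProductSpace ℂ F]
    [NormedAddCommGroup G] [InnerProductSpace ℂ G]
    (T₂ : F →ₗ.[ℂ] G) (T₁ : E →ₗ.[ℂ] F) : E →ₗ.[ℂ] G where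
  domain := (T₂.domain.comap T₁.toFun).map T₁.domain.subtype
  toFun := T₂.toFun ∘ₗ
    (T₁.toFun.restrict (p := T₂.domain.comap T₁.toFun) (q := T₂.domain) fun _ hx => hx) ∘ₗ
    (Submodule.equivMapOfInjective T₁.domain.subtype (Submodule.injective_subtype _)
      (T₂.domain.comap T₁.toFun)).symm.toLinearMap

/-- The identity as a partially defined operator (domain all of `X`). -/
def pid (X : Type*) [NormedAddCommGroup X] [InnerProductSpace ℂ X] : X →ₗ.[ℂ] X :=
  ⟨⊤, (⊤ : Submodule ℂ X).subtype⟩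

/-- Powers of a partially defined operator: `S⁰ = I`, `S¹ = S`, and recursively
`dom(S^m) = {f ∈ dom(S^{m-1}) | S^{m-1} f ∈ dom S}`, `S^m f = S (S^{m-1} f)`. -/
def pmapPow {X : Type*} [NormedAddCommGroup X] [InnerProductSpace ℂ X]
    (S : X →ₗ.[ℂ] X) : ℕ → X →ₗ.[ℂ] X
  | 0 => pid X
  | 1 => S
  | (n + 2) => pcomp S (pmapPow S (n + 1))

/-- The kernel of `A - μ·I` as a submodule of the domain of `A`. -/
def kerAt {X : Type*} [NormedAddCommGroup X] [InnerProductSpace ℂ X]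
    (A : X →ₗ.[ℂ] X) (μ : ℂ) : Submodule ℂ A.domain :=
  LinearMap.ker (A.toFun - μ • A.domain.subtype)

/-- Deficiency index `n₊(S) = dim ker(S* - i·I)`, a Hilbert-space dimension as a cardinal. -/
def nPlus (S : H →ₗ.[ℂ] H) : Cardinal := Module.rank ℂ (kerAt S.adjoint Complex.I)

/-- Deficiency index `n₋(S) = dim ker(S* + i·I)`, a Hilbert-space dimension as a cardinal. -/
def nMinus (S : H →ₗ.[ℂ] H) : Cardinal := Module.rank ℂ (kerAt S.adjoint (-Complex.I))

/-- The symmetry condition `⟪Sf, g⟫ = ⟪f, Sg⟫` for all `f, g` in the domain of `S`. -/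
def IsSymmP {X : Type*} [NormedAddCommGroup X] [InnerProductSpace ℂ X]
    (S : X →ₗ.[ℂ] X) : Prop :=
  ∀ f g : S.domain, ⟪S f, (g : X)⟫_ℂ = ⟪(f : X), S g⟫_ℂ

/-- The defect number of `T` at `0`: `def(T,0) = dim ker(T*)`, as a cardinal. -/
def defect0 (T : E →ₗ.[ℂ] F) : Cardinal := Module.rank ℂ (LinearMap.ker T.adjoint.toFun)

/-- `0` belongs to the field of regularity of `T`: there is `c > 0` with
`‖T f‖ ≥ c ‖f‖` for all `f ∈ dom T`. -/
def ZeroRegular {X Y : Type*} [NormedAddCommGroup X] [InnerProductSpace ℂ X]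
    [NormedAddCommGroup Y] [InnerProductSpace ℂ Y] (T : X →ₗ.[ℂ] Y) : Prop :=
  ∃ c : ℝ, 0 < c ∧ ∀ f : T.domain, c * ‖(f : X)‖ ≤ ‖T f‖

/-- `T` is Fredholm: densely defined, closed, with closed range, and finite-dimensional
kernel and cokernel (= kernel of the adjoint). -/
def IsFredholmP (T : E →ₗ.[ℂ] F) : Prop :=
  Dense (T.domain : Set E) ∧ T.IsClosed ∧
    IsClosed ((LinearMap.range T.toFun : Submodule ℂ F) : Set F) ∧
    Module.rank ℂ (LinearMap.ker T.toFun) < ℵ₀ ∧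
    Module.rank ℂ (LinearMap.ker T.adjoint.toFun) < ℵ₀

/-- `T` is left semi-Fredholm: densely defined, closed, with closed range and
finite-dimensional kernel. -/
def IsLeftSemiFredholmP (T : E →ₗ.[ℂ] F) : Prop :=
  Dense (T.domain : Set E) ∧ T.IsClosed ∧
    IsClosed ((LinearMap.range T.toFun : Submodule ℂ F) : Set F) ∧
    Module.rank ℂ (LinearMap.ker T.toFun) < ℵ₀

/-- The (semi-)Fredholm index `ind(T) = dim ker T - dim ker T*` (as an integer,
via `finrank`). -/
def indP (T : E →ₗ.[ℂ] F) : ℤ :=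
  (Module.finrank ℂ (LinearMap.ker T.toFun) : ℤ) -
    (Module.finrank ℂ (LinearMap.ker T.adjoint.toFun) : ℤ)

/-! For nonreal `z` the operator `S^m - z` is the product of the operators `S - λ` over the `m`-th
roots `λ` of `z`, none of which is real. By symmetry each factor is bounded below, and its range is
closed of finite codimension; closed densely defined operators of this kind are stable under
composition, and the codimensions of their ranges add up. Hence `S^m - z`, and with it `S^m`, is
closed and densely defined. The codimension of the range of `S - λ` is locally constant off the real
line, so it equals `n₊` for `λ` in the lower and `n₋` for `λ` in the upper half-plane, and the
indices of `S^m` are found by counting the roots of `z = ∓i` in the two half-planes. -/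

universe u

theorem rank_quotient_map_of_injective {K : Type*} {V W : Type u} [DivisionRing K]
    [AddCommGroup V] [Module K V] [AddCommGroup W] [Module K W] {f : V →ₗ[K] W}
    (hf : Function.Injective f) (U : Submodule K V) :
    Module.rank K (W ⧸ U.map f) =
      Module.rank K (W ⧸ LinearMap.range f) + Module.rank K (V ⧸ U) := by
  rw [LinearMap.rank_quot_submodule_map_eq]
  congr 1
  exact (Submodule.Quotient.equiv U _ (LinearEquiv.ofInjective f hf) rfl).rank_eq.symm

theorem rank_quotient_comap_subtype {R M : Type*} [Ring R] [AddCommGroup M] [Module R M]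
    {D U : Submodule R M} (h : D ⊔ U = ⊤) :
    Module.rank R (D ⧸ U.comap D.subtype) = Module.rank R (M ⧸ U) := by
  have hker : LinearMap.ker (U.mkQ ∘ₗ D.subtype) = U.comap D.subtype := by
    rw [LinearMap.ker_comp, Submodule.ker_mkQ]
  have hrange : LinearMap.range (U.mkQ ∘ₗ D.subtype) = ⊤ := by
    rw [LinearMap.range_comp, Submodule.range_subtype, Submodule.map_mkQ_eq_top, sup_comm, h]
  rw [← hker]
  exact (LinearMap.quotKerEquivOfSurjective _ (LinearMap.range_eq_top.mp hrange)).rank_eq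

theorem exists_le_isCompl_of_sup_eq_top {α : Type*} [Lattice α] [BoundedOrder α]
    [IsModularLattice α] [ComplementedLattice α] {a b : α} (h : a ⊔ b = ⊤) :
    ∃ c ≤ a, IsCompl b c := by
  obtain ⟨c, hdisj, hsup⟩ := IsModularLattice.exists_disjoint_and_sup_eq (inf_le_left : a ⊓ b ≤ a)
  have hca : c ≤ a := hsup ▸ le_sup_right
  refine ⟨c, hca, disjoint_iff.mpr ?_, codisjoint_iff.mpr ?_⟩
  · rw [← hdisj.eq_bot, inf_comm a, inf_assoc, inf_eq_right.mpr hca]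
  · rw [← sup_eq_left.mpr (inf_le_right : a ⊓ b ≤ b), sup_assoc, hsup, sup_comm, h]

section DenseSubmodule

variable {𝕜 V : Type*} [NontriviallyNormedField 𝕜] [CompleteSpace 𝕜] [AddCommGroup V]
  [TopologicalSpace V] [IsTopologicalAddGroup V] [Module 𝕜 V] [ContinuousSMul 𝕜 V]
  {D W : Submodule 𝕜 V} [FiniteDimensional 𝕜 (V ⧸ W)]

theorem sup_eq_top_of_dense (hD : Dense (D : Set V)) (hW : IsClosed (W : Set V)) : D ⊔ W = ⊤ := by
  have hclosed : IsClosed ((D ⊔ W : Submodule 𝕜 V) : Set V) :=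
    Submodule.isClosed_mono_of_finiteDimensional_quotient hW le_sup_right
  have hdense : Dense ((D ⊔ W : Submodule 𝕜 V) : Set V) :=
    hD.mono (SetLike.coe_subset_coe.mpr le_sup_left)
  exact SetLike.coe_injective (hclosed.closure_eq.symm.trans hdense.closure_eq)

/- A complement of `W` inside `D` gives a continuous projection onto `W` that maps `D` into
`D ⊓ W`. -/
theorem subset_closure_inf_of_dense (hD : Dense (D : Set V)) (hW : IsClosed (W : Set V)) :
    (W : Set V) ⊆ closure ((D ⊓ W : Submodule 𝕜 V) : Set V) := by
  obtain ⟨C, hCD, hWC⟩ := exists_le_isCompl_of_sup_eq_top (sup_eq_top_of_dense hD hW)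
  have hcompl := Submodule.IsCompl.isTopCompl_of_finiteDimensional_quotient hWC hW
  intro w hw
  rw [← (Submodule.projectionL_eq_self_iff hcompl w).mpr hw]
  refine map_mem_closure (W.projectionL C hcompl).continuous (hD w) fun d hd => ?_
  refine ⟨?_, Submodule.projectionL_apply_mem hcompl d⟩
  rw [Submodule.projectionL_eq_self_sub_projectionL hcompl.symm]
  exact D.sub_mem hd (hCD (Submodule.projectionL_apply_mem hcompl.symm d))

end DenseSubmodule

section Composition

variable {X Y Z : Type*}
  [NormedAddCommGroup X] [InnerProductSpace ℂ X]
  [NormedAddCommGroup Y] [InnerProductSpace ℂ Y]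
  [NormedAddCommGroup Z] [InnerProductSpace ℂ Z]

theorem mem_graph_pcomp {T₂ : Y →ₗ.[ℂ] Z} {T₁ : X →ₗ.[ℂ] Y} {x : X} {z : Z} :
    (x, z) ∈ (pcomp T₂ T₁).graph ↔ ∃ y, (x, y) ∈ T₁.graph ∧ (y, z) ∈ T₂.graph := by
  let e := Submodule.equivMapOfInjective T₁.domain.subtype (Submodule.injective_subtype _)
    (T₂.domain.comap T₁.toFun)
  have apply_e : ∀ w, (pcomp T₂ T₁) (e w) = T₂ ⟨T₁ w.1, w.2⟩ := fun w =>
    congrArg (fun v : T₂.domain.comap T₁.toFun => T₂ ⟨T₁ v.1, v.2⟩) (e.symm_apply_apply w)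
  constructor
  · intro h
    obtain ⟨x, rfl, rfl⟩ := (LinearPMap.mem_graph_iff _).mp h
    obtain ⟨w, rfl⟩ := e.surjective x
    exact ⟨T₁ w.1, T₁.mem_graph w.1, by rw [apply_e]; exact T₂.mem_graph ⟨T₁ w.1, w.2⟩⟩
  · rintro ⟨y, hxy, hyz⟩
    obtain ⟨x, rfl, rfl⟩ := (LinearPMap.mem_graph_iff _).mp hxy
    obtain ⟨y, hy, rfl⟩ := (LinearPMap.mem_graph_iff _).mp hyz
    have hx : x ∈ T₂.domain.comap T₁.toFun := Submodule.mem_comap.mpr (hy.subst y.2)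
    obtain rfl : y = ⟨T₁ x, hx⟩ := Subtype.ext hy
    rw [← apply_e ⟨x, hx⟩]
    exact (pcomp T₂ T₁).mem_graph (e ⟨x, hx⟩)

theorem mem_graph_pid {x y : X} : (x, y) ∈ (pid X).graph ↔ x = y := by
  rw [LinearPMap.mem_graph_iff]
  exact ⟨fun ⟨_, hx, hy⟩ => hx.symm.trans hy, fun h => ⟨⟨x, Submodule.mem_top⟩, rfl, h⟩⟩

theorem eq_of_forall_mem_graph_iff {T T' : X →ₗ.[ℂ] Y}
    (h : ∀ x y, (x, y) ∈ T.graph ↔ (x, y) ∈ T'.graph) : T = T' :=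
  LinearPMap.eq_of_eq_graph (Submodule.ext fun p => h p.1 p.2)

theorem pcomp_assoc {W : Type*} [NormedAddCommGroup W] [InnerProductSpace ℂ W]
    (T₃ : Z →ₗ.[ℂ] W) (T₂ : Y →ₗ.[ℂ] Z) (T₁ : X →ₗ.[ℂ] Y) :
    pcomp (pcomp T₃ T₂) T₁ = pcomp T₃ (pcomp T₂ T₁) :=
  eq_of_forall_mem_graph_iff fun _ _ => by simp only [mem_graph_pcomp]; tauto

theorem pcomp_pid (T : X →ₗ.[ℂ] Y) : pcomp T (pid X) = T :=
  eq_of_forall_mem_graph_iff fun _ _ => by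
    simp only [mem_graph_pcomp, mem_graph_pid, exists_eq_left']

theorem pid_pcomp (T : X →ₗ.[ℂ] Y) : pcomp (pid Y) T = T :=
  eq_of_forall_mem_graph_iff fun _ _ => by
    simp only [mem_graph_pcomp, mem_graph_pid, exists_eq_right]

theorem pmapPow_succ (S : X →ₗ.[ℂ] X) : ∀ m, pmapPow S (m + 1) = pcomp S (pmapPow S m)
  | 0 => (pcomp_pid S).symm
  | _ + 1 => rfl

theorem pmapPow_succ' (S : X →ₗ.[ℂ] X) (m : ℕ) :
    pmapPow S (m + 1) = pcomp (pmapPow S m) S := by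
  induction m with
  | zero => exact (pid_pcomp S).symm
  | succ m ih => rw [pmapPow_succ, ih, ← pcomp_assoc, ← pmapPow_succ, ih]

theorem inner_eq_of_mem_graph {T : X →ₗ.[ℂ] Y} {T' : Y →ₗ.[ℂ] X} (h : T.IsFormalAdjoint T')
    {x y' : X} {y x' : Y} (hxy : (x, y) ∈ T.graph) (hxy' : (x', y') ∈ T'.graph) :
    ⟪y, x'⟫_ℂ = ⟪x, y'⟫_ℂ := by
  obtain ⟨f, rfl, rfl⟩ := (LinearPMap.mem_graph_iff _).mp hxy
  obtain ⟨g, rfl, rfl⟩ := (LinearPMap.mem_graph_iff _).mp hxy'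
  exact h f g

theorem isFormalAdjoint_pcomp {T₁ : X →ₗ.[ℂ] Y} {T₁' : Y →ₗ.[ℂ] X} {T₂ : Y →ₗ.[ℂ] Z}
    {T₂' : Z →ₗ.[ℂ] Y} (h₁ : T₁.IsFormalAdjoint T₁') (h₂ : T₂.IsFormalAdjoint T₂') :
    (pcomp T₂ T₁).IsFormalAdjoint (pcomp T₁' T₂') := by
  intro f g
  obtain ⟨y, hy, hTy⟩ := mem_graph_pcomp.mp ((pcomp T₂ T₁).mem_graph f)
  obtain ⟨y', hy', hTy'⟩ := mem_graph_pcomp.mp ((pcomp T₁' T₂').mem_graph g)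
  exact (inner_eq_of_mem_graph h₂ hTy hy').trans (inner_eq_of_mem_graph h₁ hy hTy')

theorem isSymmP_pmapPow {S : X →ₗ.[ℂ] X} (hS : IsSymmP S) (m : ℕ) : IsSymmP (pmapPow S m) := by
  induction m with
  | zero => exact fun _ _ => rfl
  | succ m ih =>
    have h := isFormalAdjoint_pcomp (T₁ := pmapPow S m) (T₂ := S) ih hS
    rwa [← pmapPow_succ, ← pmapPow_succ'] at h

end Composition

section Factorization

open Polynomial

variable {V : Type*} [NormedAddCommGroup V] [InnerProductSpace ℂ V]

/-- The operator `A - μ·I`, with domain `dom A`. -/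
def shift (A : V →ₗ.[ℂ] V) (μ : ℂ) : V →ₗ.[ℂ] V :=
  ⟨A.domain, A.toFun - μ • A.domain.subtype⟩

theorem mem_graph_shift {A : V →ₗ.[ℂ] V} {μ : ℂ} {x y : V} :
    (x, y) ∈ (shift A μ).graph ↔ (x, y + μ • x) ∈ A.graph := by
  simp only [LinearPMap.mem_graph_iff]
  constructor
  · rintro ⟨f, rfl, rfl⟩
    exact ⟨f, rfl, (sub_add_cancel (A f) (μ • (f : V))).symm⟩
  · rintro ⟨f, rfl, hf⟩
    exact ⟨f, rfl, sub_eq_of_eq_add hf⟩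

theorem shift_zero (A : V →ₗ.[ℂ] V) : shift A 0 = A :=
  eq_of_forall_mem_graph_iff fun _ _ => by rw [mem_graph_shift, zero_smul, add_zero]

/-- The product `(S - λₖ) ⋯ (S - λ₂) (S - λ₁)` for the list `[λ₁, λ₂, …, λₖ]`. -/
def prodShift (S : V →ₗ.[ℂ] V) : List ℂ → V →ₗ.[ℂ] V
  | [] => pid V
  | μ :: L => pcomp (prodShift S L) (shift S μ)

/-- The backward shift on sequences, `(σ u)ₖ = uₖ₊₁`. -/
def backwardShift (V : Type*) [AddCommGroup V] [Module ℂ V] : Module.End ℂ (ℕ → V) :=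
  LinearMap.funLeft ℂ V Nat.succ

/-- `u` starts with `u₀, S u₀, …, Sᵏ u₀`; its later terms are arbitrary. -/
def IsOrbit (S : V →ₗ.[ℂ] V) (k : ℕ) (u : ℕ → V) : Prop :=
  ∀ j < k, (u j, u (j + 1)) ∈ S.graph

theorem exists_isOrbit_succ {S : V →ₗ.[ℂ] V} {μ : ℂ} {k : ℕ} {v : ℕ → V} {x : V}
    (hx : (x, v 0) ∈ (shift S μ).graph) (hv : IsOrbit S k v) :
    ∃ u, u 0 = x ∧ IsOrbit S (k + 1) u ∧ aeval (backwardShift V) (X - C μ) u = v := by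
  refine ⟨fun j => Nat.rec x (fun i ui => v i + μ • ui) j, rfl, ?_, ?_⟩
  · intro j hj
    induction j with
    | zero => exact mem_graph_shift.mp hx
    | succ j ih =>
      exact S.graph.add_mem (hv j (Nat.lt_of_succ_lt_succ hj))
        (S.graph.smul_mem μ (ih (Nat.lt_of_succ_lt hj)))
  · rw [map_sub, aeval_X, aeval_C]
    funext j
    exact add_sub_cancel_right _ _

theorem isOrbit_aeval_X_sub_C {S : V →ₗ.[ℂ] V} (μ : ℂ) {k : ℕ} {u : ℕ → V}
    (hu : IsOrbit S (k + 1) u) :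
    (u 0, aeval (backwardShift V) (X - C μ) u 0) ∈ (shift S μ).graph ∧
      IsOrbit S k (aeval (backwardShift V) (X - C μ) u) := by
  rw [map_sub, aeval_X, aeval_C]
  constructor
  · rw [mem_graph_shift]
    convert hu 0 k.succ_pos
    exact sub_add_cancel _ _
  · exact fun j hj => S.graph.sub_mem (hu (j + 1) (Nat.succ_lt_succ hj))
      (S.graph.smul_mem μ (hu j (Nat.lt_succ_of_lt hj)))

theorem mem_graph_prodShift {S : V →ₗ.[ℂ] V} {L : List ℂ} {x y : V} :
    (x, y) ∈ (prodShift S L).graph ↔ ∃ u, u 0 = x ∧ IsOrbit S L.length u ∧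
      aeval (backwardShift V) (L.map fun μ => X - C μ).prod u 0 = y := by
  induction L generalizing x with
  | nil =>
    rw [prodShift, mem_graph_pid, List.map_nil, List.prod_nil, map_one]
    exact ⟨fun h => ⟨fun _ => x, rfl, fun j hj => absurd hj j.not_lt_zero, h⟩,
      fun ⟨u, hx, _, hy⟩ => hx.symm.trans hy⟩
  | cons μ L ih =>
    rw [prodShift, mem_graph_pcomp, List.map_cons, List.prod_cons, mul_comm, map_mul]
    constructor
    · rintro ⟨w, hxw, hwy⟩
      obtain ⟨v, rfl, hv, hy⟩ := ih.mp hwy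
      obtain ⟨u, hux, hu, rfl⟩ := exists_isOrbit_succ hxw hv
      exact ⟨u, hux, hu, hy⟩
    · rintro ⟨u, rfl, hu, hy⟩
      obtain ⟨hx, hv⟩ := isOrbit_aeval_X_sub_C μ hu
      exact ⟨_, hx, ih.mpr ⟨_, rfl, hv, hy⟩⟩

theorem prodShift_eq_shift_prodShift {S : V →ₗ.[ℂ] V} {L L' : List ℂ} {z : ℂ}
    (hlen : L.length = L'.length)
    (hprod : (L.map fun μ => X - C μ).prod =
      (L'.map fun μ => X - C μ).prod - C z) :
    prodShift S L = shift (prodShift S L') z := by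
  refine eq_of_forall_mem_graph_iff fun x y => ?_
  rw [mem_graph_shift, mem_graph_prodShift, mem_graph_prodShift, hlen, hprod, map_sub, aeval_C]
  refine exists_congr fun u => and_congr_right fun hx => and_congr_right fun _ => ?_
  rw [← hx]
  exact sub_eq_iff_eq_add

theorem pmapPow_eq_prodShift (S : V →ₗ.[ℂ] V) (m : ℕ) :
    pmapPow S m = prodShift S (List.replicate m 0) := by
  induction m with
  | zero => rfl
  | succ m ih => rw [pmapPow_succ', ih, List.replicate_succ, prodShift, shift_zero]

theorem prod_X_sub_C_nthRoots {K : Type*} [Field K] [IsAlgClosed K] {m : ℕ} (hm : m ≠ 0) (z : K) :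
    ((nthRoots m z).map fun μ => X - C μ).prod = X ^ m - C z :=
  ((IsAlgClosed.splits _).eq_prod_roots_of_monic (monic_X_pow_sub_C z hm)).symm

theorem card_nthRoots_of_isAlgClosed {K : Type*} [Field K] [IsAlgClosed K] (m : ℕ) (z : K) :
    (nthRoots m z).card = m :=
  (IsAlgClosed.splits (X ^ m - C z)).natDegree_eq_card_roots.symm.trans natDegree_X_pow_sub_C

theorem shift_pmapPow_eq_prodShift (S : V →ₗ.[ℂ] V) {m : ℕ} (hm : m ≠ 0) (z : ℂ) :
    shift (pmapPow S m) z = prodShift S (nthRoots m z).toList := by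
  rw [pmapPow_eq_prodShift]
  refine (prodShift_eq_shift_prodShift ?_ ?_).symm
  · rw [Multiset.length_toList, card_nthRoots_of_isAlgClosed, List.length_replicate]
  · rw [Multiset.prod_map_toList, prod_X_sub_C_nthRoots hm, List.map_replicate,
      List.prod_replicate, C_0, sub_zero]

end Factorization

section RegularFredholm

variable {X Y Z : Type*}
  [NormedAddCommGroup X] [InnerProductSpace ℂ X]
  [NormedAddCommGroup Y] [InnerProductSpace ℂ Y]
  [NormedAddCommGroup Z] [InnerProductSpace ℂ Z]

/-- The codimension of the range of `T`. For a densely defined operator with closed range it is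
the defect number `dim ker T*`. -/
def rangeCodim (T : X →ₗ.[ℂ] Y) : Cardinal :=
  Module.rank ℂ (Y ⧸ LinearMap.range T.toFun)

theorem mem_range_toFun {T : X →ₗ.[ℂ] Y} {y : Y} :
    y ∈ LinearMap.range T.toFun ↔ ∃ x, (x, y) ∈ T.graph :=
  LinearPMap.mem_range_iff

theorem rangeCodim_pid : rangeCodim (pid X) = 0 := by
  have hrange : LinearMap.range (pid X).toFun = ⊤ :=
    Submodule.range_subtype _
  rw [rangeCodim, hrange]
  exact rank_subsingleton' ℂ _

theorem isClosed_pid : (pid X).IsClosed := by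
  have hgraph : ((pid X).graph : Set (X × X)) = {p | p.1 = p.2} := Set.ext fun _ => mem_graph_pid
  rw [LinearPMap.IsClosed, hgraph]
  exact isClosed_eq continuous_fst continuous_snd

theorem mul_norm_le_of_mem_graph {T : X →ₗ.[ℂ] Y} {c : ℝ}
    (hT : ∀ f : T.domain, c * ‖(f : X)‖ ≤ ‖T f‖) {x : X} {y : Y} (h : (x, y) ∈ T.graph) :
    c * ‖x‖ ≤ ‖y‖ := by
  obtain ⟨f, rfl, rfl⟩ := (LinearPMap.mem_graph_iff _).mp h
  exact hT f

theorem zeroRegular_pid : ZeroRegular (pid X) :=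
  ⟨1, one_pos, fun _ => (one_mul _).le⟩

theorem zeroRegular_pcomp {T₂ : Y →ₗ.[ℂ] Z} {T₁ : X →ₗ.[ℂ] Y} (h₂ : ZeroRegular T₂)
    (h₁ : ZeroRegular T₁) : ZeroRegular (pcomp T₂ T₁) := by
  obtain ⟨c₂, hc₂, h₂⟩ := h₂
  obtain ⟨c₁, hc₁, h₁⟩ := h₁
  refine ⟨c₂ * c₁, mul_pos hc₂ hc₁, fun f => ?_⟩
  obtain ⟨y, hy, hz⟩ := mem_graph_pcomp.mp ((pcomp T₂ T₁).mem_graph f)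
  calc c₂ * c₁ * ‖(f : X)‖ = c₂ * (c₁ * ‖(f : X)‖) := mul_assoc ..
    _ ≤ c₂ * ‖y‖ := by gcongr; exact mul_norm_le_of_mem_graph h₁ hy
    _ ≤ ‖pcomp T₂ T₁ f‖ := mul_norm_le_of_mem_graph h₂ hz

theorem ZeroRegular.injective {T : X →ₗ.[ℂ] Y} (h : ZeroRegular T) :
    Function.Injective T.toFun := by
  obtain ⟨c, hc, h⟩ := h
  refine (injective_iff_map_eq_zero _).mpr fun f hf => Subtype.ext (norm_le_zero_iff.mp ?_)
  have : c * ‖(f : X)‖ ≤ 0 := (h f).trans_eq (norm_eq_zero.mpr hf)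
  exact nonpos_of_mul_nonpos_right this hc

theorem ZeroRegular.antilipschitz_snd {T : X →ₗ.[ℂ] Y} (h : ZeroRegular T) :
    ∃ K, AntilipschitzWith K fun p : T.graph => (p : X × Y).2 := by
  obtain ⟨c, hc, h⟩ := h
  refine ⟨(max c⁻¹ 1).toNNReal, AddMonoidHomClass.antilipschitz_of_bound
    (LinearMap.snd ℂ X Y ∘ₗ T.graph.subtype) fun p => ?_⟩
  rw [Real.coe_toNNReal _ (le_max_of_le_right zero_le_one)]
  refine (max_le ?_ ?_ : max ‖(p : X × Y).1‖ ‖(p : X × Y).2‖ ≤ _)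
  · calc ‖(p : X × Y).1‖ ≤ c⁻¹ * ‖(p : X × Y).2‖ :=
          (le_inv_mul_iff₀ hc).mpr (mul_norm_le_of_mem_graph h p.2)
      _ ≤ max c⁻¹ 1 * ‖(p : X × Y).2‖ := by gcongr; exact le_max_left ..
  · exact le_mul_of_one_le_left (norm_nonneg _) (le_max_right ..)

theorem isClosedEmbedding_snd_graph [CompleteSpace X] [CompleteSpace Y] {T : X →ₗ.[ℂ] Y}
    (hT : T.IsClosed) (h : ZeroRegular T) :
    Topology.IsClosedEmbedding fun p : T.graph => (p : X × Y).2 := by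
  have : CompleteSpace T.graph := hT.completeSpace_coe
  obtain ⟨K, hK⟩ := h.antilipschitz_snd
  exact hK.isClosedEmbedding (uniformContinuous_snd.comp uniformContinuous_subtype_val)

theorem isClosed_range [CompleteSpace X] [CompleteSpace Y] {T : X →ₗ.[ℂ] Y}
    (hT : T.IsClosed) (h : ZeroRegular T) : IsClosed (LinearMap.range T.toFun : Set Y) := by
  convert (isClosedEmbedding_snd_graph hT h).isClosed_range
  ext y
  rw [SetLike.mem_coe, mem_range_toFun]
  simp

theorem isClosed_pcomp [CompleteSpace Y] [CompleteSpace Z] {T₂ : Y →ₗ.[ℂ] Z} {T₁ : X →ₗ.[ℂ] Y}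
    (hT₁ : T₁.IsClosed) (hT₂ : T₂.IsClosed) (h₂ : ZeroRegular T₂) : (pcomp T₂ T₁).IsClosed := by
  have hemb := (Topology.IsClosedEmbedding.id (X := X)).prodMap
    (isClosedEmbedding_snd_graph hT₂ h₂)
  have hpre : IsClosed {p : X × T₂.graph | (p.1, (p.2 : Y × Z).1) ∈ T₁.graph} :=
    IsClosed.preimage (by fun_prop) hT₁
  refine (congrArg IsClosed (Set.ext fun ⟨x, z⟩ => ?_)).mpr (hemb.isClosedMap _ hpre)
  rw [SetLike.mem_coe, mem_graph_pcomp]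
  constructor
  · rintro ⟨y, hxy, hyz⟩
    exact ⟨(x, ⟨(y, z), hyz⟩), hxy, rfl⟩
  · rintro ⟨⟨_, ⟨⟨y, _⟩, hyz⟩⟩, hxy, ⟨⟩⟩
    exact ⟨y, hxy, hyz⟩

theorem range_pcomp (T₂ : Y →ₗ.[ℂ] Z) (T₁ : X →ₗ.[ℂ] Y) :
    LinearMap.range (pcomp T₂ T₁).toFun =
      ((LinearMap.range T₁.toFun).comap T₂.domain.subtype).map T₂.toFun := by
  ext z
  simp only [mem_range_toFun, mem_graph_pcomp, Submodule.mem_map, Submodule.mem_comap]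
  constructor
  · rintro ⟨x, y, hxy, hyz⟩
    obtain ⟨y, rfl, rfl⟩ := (LinearPMap.mem_graph_iff _).mp hyz
    exact ⟨y, ⟨x, hxy⟩, rfl⟩
  · rintro ⟨y, ⟨x, hxy⟩, rfl⟩
    exact ⟨x, y, hxy, T₂.mem_graph y⟩

theorem rangeCodim_pcomp {Y Z : Type u}
    [NormedAddCommGroup Y] [InnerProductSpace ℂ Y]
    [NormedAddCommGroup Z] [InnerProductSpace ℂ Z]
    {T₂ : Y →ₗ.[ℂ] Z} {T₁ : X →ₗ.[ℂ] Y} (hinj : Function.Injective T₂.toFun)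
    (hsup : T₂.domain ⊔ LinearMap.range T₁.toFun = ⊤) :
    rangeCodim (pcomp T₂ T₁) = rangeCodim T₂ + rangeCodim T₁ := by
  rw [rangeCodim, range_pcomp, rank_quotient_map_of_injective hinj,
    rank_quotient_comap_subtype hsup, rangeCodim, rangeCodim]

theorem dense_domain_pcomp {T₂ : Y →ₗ.[ℂ] Z} {T₁ : X →ₗ.[ℂ] Y}
    (h₁ : ZeroRegular T₁) (hdense : Dense (T₁.domain : Set X))
    (hrange : (LinearMap.range T₁.toFun : Set Y) ⊆
      closure ((T₂.domain ⊓ LinearMap.range T₁.toFun : Submodule ℂ Y) : Set Y)) :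
    Dense ((pcomp T₂ T₁).domain : Set X) := by
  obtain ⟨c, hc, h₁⟩ := h₁
  refine (hdense.mono fun x hx => Metric.mem_closure_iff.mpr fun ε hε => ?_).of_closure
  obtain ⟨_, ⟨hdom, ⟨x', rfl⟩⟩, hdist⟩ :=
    Metric.mem_closure_iff.mp (hrange ⟨⟨x, hx⟩, rfl⟩) (c * ε) (mul_pos hc hε)
  refine ⟨x', LinearPMap.mem_domain_iff.mpr ⟨_, mem_graph_pcomp.mpr
    ⟨_, T₁.mem_graph x', T₂.mem_graph ⟨_, hdom⟩⟩⟩, lt_of_mul_lt_mul_left ?_ hc.le⟩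
  calc c * dist x x' = c * ‖x - x'‖ := by rw [dist_eq_norm]
    _ ≤ ‖T₁ (⟨x, hx⟩ - x')‖ := h₁ (⟨x, hx⟩ - x')
    _ = dist (T₁ ⟨x, hx⟩) (T₁ x') := by rw [T₁.map_sub, dist_eq_norm]
    _ < c * ε := hdist

/-- A densely defined closed operator which is bounded below and whose range has finite
codimension, that is, an injective Fredholm operator. -/
structure IsRegularFredholm (T : X →ₗ.[ℂ] Y) : Prop where
  dense : Dense (T.domain : Set X)
  isClosed : T.IsClosed
  zeroRegular : ZeroRegular T
  rangeCodim_lt : rangeCodim T < ℵ₀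

theorem isRegularFredholm_pid : IsRegularFredholm (pid X) where
  dense := dense_univ
  isClosed := isClosed_pid
  zeroRegular := zeroRegular_pid
  rangeCodim_lt := rangeCodim_pid.trans_lt aleph0_pos

theorem IsRegularFredholm.finiteDimensional_quotient_range {T : X →ₗ.[ℂ] Y}
    (h : IsRegularFredholm T) : FiniteDimensional ℂ (Y ⧸ LinearMap.range T.toFun) :=
  Module.rank_lt_aleph0_iff.mp h.rangeCodim_lt

section Composition

variable {Y Z : Type u}
  [NormedAddCommGroup Y] [InnerProductSpace ℂ Y] [NormedAddCommGroup Z] [InnerProductSpace ℂ Z]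
  [CompleteSpace X] [CompleteSpace Y] {T₂ : Y →ₗ.[ℂ] Z} {T₁ : X →ₗ.[ℂ] Y}

theorem IsRegularFredholm.rangeCodim_pcomp (h₂ : IsRegularFredholm T₂)
    (h₁ : IsRegularFredholm T₁) :
    rangeCodim (pcomp T₂ T₁) = rangeCodim T₂ + rangeCodim T₁ :=
  have := h₁.finiteDimensional_quotient_range
  _root_.rangeCodim_pcomp h₂.zeroRegular.injective
    (sup_eq_top_of_dense h₂.dense (isClosed_range h₁.isClosed h₁.zeroRegular))

theorem IsRegularFredholm.pcomp [CompleteSpace Z] (h₂ : IsRegularFredholm T₂)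
    (h₁ : IsRegularFredholm T₁) : IsRegularFredholm (pcomp T₂ T₁) where
  dense :=
    have := h₁.finiteDimensional_quotient_range
    dense_domain_pcomp h₁.zeroRegular h₁.dense
      (subset_closure_inf_of_dense h₂.dense (isClosed_range h₁.isClosed h₁.zeroRegular))
  isClosed := isClosed_pcomp h₁.isClosed h₂.isClosed h₂.zeroRegular
  zeroRegular := zeroRegular_pcomp h₂.zeroRegular h₁.zeroRegular
  rangeCodim_lt := by
    rw [h₂.rangeCodim_pcomp h₁]
    exact add_lt_aleph0 h₂.rangeCodim_lt h₁.rangeCodim_lt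

end Composition

end RegularFredholm

section ProdShift

variable {V : Type*} [NormedAddCommGroup V] [InnerProductSpace ℂ V] [CompleteSpace V]
  {S : V →ₗ.[ℂ] V}

theorem isRegularFredholm_prodShift {L : List ℂ} (h : ∀ μ ∈ L, IsRegularFredholm (shift S μ)) :
    IsRegularFredholm (prodShift S L) := by
  induction L with
  | nil => exact isRegularFredholm_pid
  | cons μ L ih =>
    obtain ⟨hμ, hL⟩ := List.forall_mem_cons.mp h
    exact (ih hL).pcomp hμ

theorem rangeCodim_prodShift {L : List ℂ} (h : ∀ μ ∈ L, IsRegularFredholm (shift S μ)) :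
    rangeCodim (prodShift S L) = (L.map fun μ => rangeCodim (shift S μ)).sum := by
  induction L with
  | nil => exact rangeCodim_pid
  | cons μ L ih =>
    obtain ⟨hμ, hL⟩ := List.forall_mem_cons.mp h
    rw [prodShift, (isRegularFredholm_prodShift hL).rangeCodim_pcomp hμ, ih hL, List.map_cons,
      List.sum_cons, add_comm]

end ProdShift

section Stability

variable {V : Type*} [NormedAddCommGroup V] [InnerProductSpace ℂ V] {A : V →ₗ.[ℂ] V}

theorem isClosed_shift (hA : A.IsClosed) (μ : ℂ) : (shift A μ).IsClosed := by
  have hgraph : ((shift A μ).graph : Set (V × V)) =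
      (fun p : V × V => (p.1, p.2 + μ • p.1)) ⁻¹' A.graph := Set.ext fun _ => mem_graph_shift
  rw [LinearPMap.IsClosed, hgraph]
  exact IsClosed.preimage (by fun_prop) hA

theorem shift_shift (A : V →ₗ.[ℂ] V) (μ ν : ℂ) : shift (shift A μ) ν = shift A (μ + ν) :=
  eq_of_forall_mem_graph_iff fun x y => by
    simp only [mem_graph_shift, add_smul, add_assoc, add_comm (ν • x)]

theorem isClosed_of_isClosed_shift {μ : ℂ} (h : (shift A μ).IsClosed) : A.IsClosed := by
  have := isClosed_shift h (-μ)
  rwa [shift_shift, add_neg_cancel, shift_zero] at this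

theorem shift_apply_sub_shift_apply (l k : ℂ) (f : A.domain) :
    shift A k f - shift A l f = (l - k) • (f : V) := by
  change (A f - k • (f : V)) - (A f - l • (f : V)) = _
  module

/- If `y = (A - k) f` is orthogonal to `(A - l) f`, then by Pythagoras
`‖(A - l) f‖ ≤ ‖y - (A - l) f‖ = ‖l - k‖ ‖f‖`. -/
theorem eq_zero_of_shift_apply_mem_orthogonal {l k : ℂ} {c : ℝ}
    (hl : ∀ f : A.domain, c * ‖(f : V)‖ ≤ ‖shift A l f‖) (hk : ‖l - k‖ < c) {f : A.domain}
    (hf : shift A k f ∈ (LinearMap.range (shift A l).toFun)ᗮ) : f = 0 := by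
  set g := shift A l f
  have horth : ⟪shift A k f, -g⟫_ℂ = 0 := Submodule.inner_left_of_mem_orthogonal
    (neg_mem (LinearMap.mem_range_self (shift A l).toFun f)) hf
  have hpyth := norm_add_sq_eq_norm_sq_add_norm_sq_of_inner_eq_zero _ _ horth
  rw [← sub_eq_add_neg, shift_apply_sub_shift_apply, norm_neg] at hpyth
  have hle : c * ‖(f : V)‖ ≤ ‖l - k‖ * ‖(f : V)‖ :=
    calc c * ‖(f : V)‖ ≤ ‖g‖ := hl f
      _ ≤ ‖(l - k) • (f : V)‖ := by nlinarith [norm_nonneg g, norm_nonneg ((l - k) • (f : V))]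
      _ = ‖l - k‖ * ‖(f : V)‖ := norm_smul ..
  refine Subtype.ext (norm_le_zero_iff.mp ?_)
  nlinarith

theorem rangeCodim_shift_le [CompleteSpace V] {l k : ℂ} {c : ℝ}
    (hl : ∀ f : A.domain, c * ‖(f : V)‖ ≤ ‖shift A l f‖)
    (hclosed : IsClosed (LinearMap.range (shift A l).toFun : Set V)) (hk : ‖l - k‖ < c) :
    rangeCodim (shift A l) ≤ rangeCodim (shift A k) := by
  set R := LinearMap.range (shift A l).toFun
  have : CompleteSpace R := hclosed.completeSpace_coe
  let q : Rᗮ →ₗ[ℂ] V ⧸ LinearMap.range (shift A k).toFun := Submodule.mkQ _ ∘ₗ Rᗮ.subtype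
  have hq : Function.Injective q := by
    refine (injective_iff_map_eq_zero q).mpr fun y hy => ?_
    obtain ⟨f, hf⟩ := (Submodule.Quotient.mk_eq_zero _).mp hy
    obtain rfl : f = 0 := eq_zero_of_shift_apply_mem_orthogonal hl hk (hf.symm.subst y.2)
    exact Subtype.ext (hf.symm.trans (map_zero _))
  calc Module.rank ℂ (V ⧸ R) = Module.rank ℂ Rᗮ :=
      (Submodule.quotientEquivOfIsCompl R Rᗮ R.isCompl_orthogonal).rank_eq
    _ ≤ rangeCodim (shift A k) := LinearMap.rank_le_of_injective q hq

theorem rangeCodim_shift_eq_of_isPreconnected [CompleteSpace V] (hA : A.IsClosed) {s : Set ℂ}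
    (hs : IsPreconnected s) (hreg : ∀ μ ∈ s, ZeroRegular (shift A μ)) {l k : ℂ} (hl : l ∈ s)
    (hk : k ∈ s) : rangeCodim (shift A l) = rangeCodim (shift A k) := by
  refine hs.induction₂ (fun l k => rangeCodim (shift A l) = rangeCodim (shift A k)) ?_
    (fun _ _ _ _ _ _ => Eq.trans) (fun _ _ _ _ => Eq.symm) hl hk
  intro l hl
  obtain ⟨c, hc, hbound⟩ := hreg l hl
  have hball := mem_nhdsWithin_of_mem_nhds (t := s) (Metric.ball_mem_nhds l (half_pos hc))
  filter_upwards [self_mem_nhdsWithin, hball] with k hk hkl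
  have hdist : ‖k - l‖ < c / 2 := mem_ball_iff_norm.mp hkl
  have hbound' : ∀ f : A.domain, c / 2 * ‖(f : V)‖ ≤ ‖shift A k f‖ := fun f => by
    have := norm_sub_norm_le (shift A l f) (shift A k f)
    rw [shift_apply_sub_shift_apply, norm_smul] at this
    nlinarith [hbound f, norm_nonneg (f : V)]
  have hclosed : ∀ μ ∈ s, IsClosed (LinearMap.range (shift A μ).toFun : Set V) := fun μ hμ =>
    isClosed_range (isClosed_shift hA μ) (hreg μ hμ)
  apply le_antisymm
  · exact rangeCodim_shift_le hbound (hclosed l hl) (by rw [norm_sub_rev]; linarith)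
  · exact rangeCodim_shift_le hbound' (hclosed k hk) hdist

end Stability

section Deficiency

open ComplexConjugate

variable {V : Type*} [NormedAddCommGroup V] [InnerProductSpace ℂ V] {S : V →ₗ.[ℂ] V}

theorem abs_im_mul_norm_le_norm_shift (hS : IsSymmP S) (μ : ℂ) (f : S.domain) :
    |μ.im| * ‖(f : V)‖ ≤ ‖shift S μ f‖ := by
  have hreal : (⟪S f, (f : V)⟫_ℂ).im = 0 := by
    rw [← Complex.conj_eq_iff_im, inner_conj_symm, hS]
  have him : (⟪shift S μ f, (f : V)⟫_ℂ).im = μ.im * ‖(f : V)‖ ^ 2 := by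
    change (⟪S f - μ • (f : V), (f : V)⟫_ℂ).im = _
    rw [inner_sub_left, inner_smul_left, inner_self_eq_norm_sq_to_K, Complex.sub_im, hreal]
    simp [← Complex.ofReal_pow]
  obtain hf | hf := (norm_nonneg (f : V)).eq_or_lt
  · rw [← hf, mul_zero]
    exact norm_nonneg _
  · refine le_of_mul_le_mul_right ?_ hf
    calc |μ.im| * ‖(f : V)‖ * ‖(f : V)‖ = |(⟪shift S μ f, (f : V)⟫_ℂ).im| := by
          rw [him, abs_mul, abs_of_nonneg (sq_nonneg ‖(f : V)‖), sq, mul_assoc]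
      _ ≤ ‖⟪shift S μ f, (f : V)⟫_ℂ‖ := Complex.abs_im_le_norm _
      _ ≤ ‖shift S μ f‖ * ‖(f : V)‖ := norm_inner_le_norm _ _

theorem zeroRegular_shift_of_im_ne_zero (hS : IsSymmP S) {μ : ℂ} (hμ : μ.im ≠ 0) :
    ZeroRegular (shift S μ) :=
  ⟨|μ.im|, abs_pos.mpr hμ, abs_im_mul_norm_le_norm_shift hS μ⟩

variable [CompleteSpace V]

theorem mem_graph_adjoint_iff (hd : Dense (S.domain : Set V)) {x y : V} :
    (x, y) ∈ S.adjoint.graph ↔ ∀ f : S.domain, ⟪y, (f : V)⟫_ℂ = ⟪x, S f⟫_ℂ := by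
  rw [LinearPMap.mem_graph_iff]
  constructor
  · rintro ⟨g, rfl, rfl⟩ f
    exact LinearPMap.adjoint_isFormalAdjoint hd g f
  · intro h
    exact ⟨⟨x, LinearPMap.mem_adjoint_domain_of_exists x ⟨y, h⟩⟩, rfl,
      LinearPMap.adjoint_apply_eq hd _ h⟩

theorem map_kerAt_adjoint (hd : Dense (S.domain : Set V)) (μ : ℂ) :
    (kerAt S.adjoint μ).map S.adjoint.domain.subtype =
      (LinearMap.range (shift S (conj μ)).toFun)ᗮ := by
  ext x
  have hmem : x ∈ (kerAt S.adjoint μ).map S.adjoint.domain.subtype ↔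
      (x, μ • x) ∈ S.adjoint.graph := by
    rw [LinearPMap.mem_graph_iff]
    constructor
    · rintro ⟨g, hg, rfl⟩
      exact ⟨g, rfl, sub_eq_zero.mp hg⟩
    · rintro ⟨g, rfl, hg⟩
      exact ⟨g, sub_eq_zero.mpr hg, rfl⟩
  rw [hmem, mem_graph_adjoint_iff hd, Submodule.mem_orthogonal']
  have hinner : ∀ f : S.domain,
      ⟪x, shift S (conj μ) f⟫_ℂ = ⟪x, S f⟫_ℂ - ⟪μ • x, (f : V)⟫_ℂ := fun f => by
    change ⟪x, S f - conj μ • (f : V)⟫_ℂ = _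
    rw [inner_sub_right, inner_smul_right, inner_smul_left]
  constructor
  · rintro h _ ⟨f, rfl⟩
    exact (hinner f).trans (sub_eq_zero.mpr (h f).symm)
  · intro h f
    exact (sub_eq_zero.mp ((hinner f).symm.trans (h _ ⟨f, rfl⟩))).symm

theorem rank_kerAt_adjoint_of_isClosed_range (hd : Dense (S.domain : Set V)) {μ : ℂ}
    (hclosed : IsClosed (LinearMap.range (shift S (conj μ)).toFun : Set V)) :
    Module.rank ℂ (kerAt S.adjoint μ) = rangeCodim (shift S (conj μ)) := by
  have : CompleteSpace (LinearMap.range (shift S (conj μ)).toFun) := hclosed.completeSpace_coe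
  rw [(Submodule.equivMapOfInjective _ (Submodule.injective_subtype _)
    (kerAt S.adjoint μ)).rank_eq, map_kerAt_adjoint hd]
  exact (Submodule.quotientEquivOfIsCompl _ _ (Submodule.isCompl_orthogonal _)).rank_eq.symm

/-- A densely defined, closed, symmetric operator. -/
structure IsClosedSymmetric (S : V →ₗ.[ℂ] V) : Prop where
  dense : Dense (S.domain : Set V)
  isClosed : S.IsClosed
  symm : IsSymmP S

namespace IsClosedSymmetric

theorem rank_kerAt_adjoint (h : IsClosedSymmetric S) {μ : ℂ} (hμ : μ.im ≠ 0) :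
    Module.rank ℂ (kerAt S.adjoint μ) = rangeCodim (shift S (conj μ)) :=
  rank_kerAt_adjoint_of_isClosed_range h.dense (isClosed_range (isClosed_shift h.isClosed _)
    (zeroRegular_shift_of_im_ne_zero h.symm (by rwa [Complex.conj_im, neg_ne_zero])))

theorem rangeCodim_shift_of_im_neg (h : IsClosedSymmetric S) {μ : ℂ} (hμ : μ.im < 0) :
    rangeCodim (shift S μ) = nPlus S := by
  rw [nPlus, h.rank_kerAt_adjoint (by simp), Complex.conj_I]
  exact rangeCodim_shift_eq_of_isPreconnected h.isClosed (convex_halfSpace_im_lt 0).isPreconnected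
    (fun ν hν => zeroRegular_shift_of_im_ne_zero h.symm hν.ne) hμ (by simp)

theorem rangeCodim_shift_of_im_pos (h : IsClosedSymmetric S) {μ : ℂ} (hμ : 0 < μ.im) :
    rangeCodim (shift S μ) = nMinus S := by
  rw [nMinus, h.rank_kerAt_adjoint (by simp), map_neg, Complex.conj_I, neg_neg]
  exact rangeCodim_shift_eq_of_isPreconnected h.isClosed (convex_halfSpace_im_gt 0).isPreconnected
    (fun ν hν => zeroRegular_shift_of_im_ne_zero h.symm (ne_of_gt hν)) hμ (by simp)

theorem rangeCodim_shift_of_im_ne_zero (h : IsClosedSymmetric S) {μ : ℂ} (hμ : μ.im ≠ 0) :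
    rangeCodim (shift S μ) = if 0 < μ.im then nMinus S else nPlus S := by
  split_ifs with hpos
  · exact h.rangeCodim_shift_of_im_pos hpos
  · exact h.rangeCodim_shift_of_im_neg (lt_of_le_of_ne (not_lt.mp hpos) hμ)

theorem isRegularFredholm_shift (h : IsClosedSymmetric S) (hp : nPlus S < ℵ₀)
    (hm : nMinus S < ℵ₀) {μ : ℂ} (hμ : μ.im ≠ 0) : IsRegularFredholm (shift S μ) where
  dense := h.dense
  isClosed := isClosed_shift h.isClosed μ
  zeroRegular := zeroRegular_shift_of_im_ne_zero h.symm hμ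
  rangeCodim_lt := by
    rw [h.rangeCodim_shift_of_im_ne_zero hμ]
    split_ifs <;> assumption

end IsClosedSymmetric

end Deficiency

section RootCounting

open Polynomial ComplexConjugate

theorem sum_map_ite_const {α M : Type*} [AddCommMonoid M] (s : Multiset α) (p : α → Prop)
    [DecidablePred p] (a b : M) : (s.map fun x => if p x then a else b).sum =
      s.countP p • a + s.countP (fun x => ¬p x) • b := by
  induction s using Multiset.induction_on with
  | empty => simp
  | cons x s ih =>
    rw [Multiset.map_cons, Multiset.sum_cons, ih]
    by_cases hx : p x
    · rw [if_pos hx, Multiset.countP_cons_of_pos _ hx,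
        Multiset.countP_cons_of_neg (p := fun x => ¬p x) _ (not_not.mpr hx), succ_nsmul', add_assoc]
    · rw [if_neg hx, Multiset.countP_cons_of_neg _ hx,
        Multiset.countP_cons_of_pos (p := fun x => ¬p x) _ hx, succ_nsmul', add_left_comm]

theorem card_filter_lt_range {k m : ℕ} (h : k ≤ m) :
    ((Multiset.range m).filter (· < k)).card = k := by
  have hfilter : (Finset.range m).filter (· < k) = Finset.range k := by grind
  exact (congrArg Finset.card hfilter).trans (Finset.card_range k)

theorem im_ne_zero_of_mem_nthRoots {m : ℕ} (hm : m ≠ 0) {z μ : ℂ} (hz : z.im ≠ 0)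
    (hμ : μ ∈ nthRoots m z) : μ.im ≠ 0 := by
  rw [mem_nthRoots hm.bot_lt] at hμ
  contrapose hz
  rw [← Complex.conj_eq_iff_im] at hz ⊢
  rw [← hμ, map_pow, hz]

theorem nthRoots_I {m : ℕ} (hm : m ≠ 0) :
    nthRoots m Complex.I = (Multiset.range m).map fun j : ℕ =>
      Complex.exp (((4 * j + 1) / (2 * m) * Real.pi : ℝ) * Complex.I) := by
  have hα : Complex.exp (Real.pi / (2 * m) * Complex.I) ^ m = Complex.I := by
    rw [← Complex.exp_nat_mul]
    convert Complex.exp_pi_div_two_mul_I using 2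
    field_simp
  rw [(Complex.isPrimitiveRoot_exp m hm).nthRoots_eq hα]
  refine Multiset.map_congr rfl fun j _ => ?_
  rw [← Complex.exp_nat_mul, ← Complex.exp_add]
  congr 1
  push_cast
  field_simp
  ring

theorem sin_mul_pi_pos_iff {t : ℝ} (h₀ : 0 < t) (h₂ : t < 2) :
    0 < Real.sin (t * Real.pi) ↔ t < 1 := by
  have hpi := Real.pi_pos
  constructor
  · intro hsin
    by_contra! ht
    have := Real.sin_nonneg_of_nonneg_of_le_pi (x := t * Real.pi - Real.pi) (by nlinarith)
      (by nlinarith)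
    rw [Real.sin_sub_pi] at this
    linarith
  · intro ht
    exact Real.sin_pos_of_pos_of_lt_pi (by positivity) (by nlinarith)

theorem countP_im_pos_nthRoots_I {m : ℕ} (hm : m ≠ 0) :
    (nthRoots m Complex.I).countP (fun μ => 0 < μ.im) = (m + 1) / 2 := by
  have : (0 : ℝ) < m := Nat.cast_pos.mpr hm.bot_lt
  have him : ∀ j ∈ Multiset.range m,
      0 < Real.sin ((4 * j + 1) / (2 * m) * Real.pi) ↔ j < (m + 1) / 2 := fun j hj => by
    have hj' : (j : ℝ) + 1 ≤ m := mod_cast Multiset.mem_range.mp hj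
    rw [sin_mul_pi_pos_iff (by positivity) (by rw [div_lt_iff₀ (by positivity)]; linarith),
      div_lt_one (by positivity)]
    norm_cast
    omega
  rw [nthRoots_I hm, Multiset.countP_map]
  simp only [Complex.exp_ofReal_mul_I_im]
  rw [Multiset.filter_congr him, card_filter_lt_range (by omega)]

theorem countP_not_im_pos_nthRoots {m : ℕ} (hm : m ≠ 0) {z : ℂ} (hz : z.im ≠ 0) :
    (nthRoots m z).countP (fun μ => ¬0 < μ.im) = (nthRoots m z).countP (fun μ => μ.im < 0) :=
  Multiset.countP_congr rfl fun _ hμ => propext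
    (not_lt.trans (im_ne_zero_of_mem_nthRoots hm hz hμ).le_iff_lt)

theorem countP_im_neg_nthRoots_I {m : ℕ} (hm : m ≠ 0) :
    (nthRoots m Complex.I).countP (fun μ => μ.im < 0) = m / 2 := by
  have hcard := Multiset.card_eq_countP_add_countP (fun μ : ℂ => 0 < μ.im) (nthRoots m Complex.I)
  rw [card_nthRoots_of_isAlgClosed, countP_im_pos_nthRoots_I hm,
    countP_not_im_pos_nthRoots hm (by simp)] at hcard
  omega

theorem nthRoots_conj (m : ℕ) (z : ℂ) : nthRoots m (conj z) = (nthRoots m z).map conj := by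
  have := (IsAlgClosed.splits (X ^ m - C z)).roots_map (starRingEnd ℂ)
  rwa [Polynomial.map_sub, Polynomial.map_pow, map_X, map_C] at this

theorem countP_nthRoots_neg_I (m : ℕ) (p : ℂ → Prop) [DecidablePred p] :
    (nthRoots m (-Complex.I)).countP p = (nthRoots m Complex.I).countP (fun μ => p (conj μ)) := by
  rw [← Complex.conj_I, nthRoots_conj, Multiset.countP_map, Multiset.countP_eq_card_filter]

end RootCounting

section Powers

open Polynomial

namespace IsClosedSymmetric

variable {V : Type*} [NormedAddCommGroup V] [InnerProductSpace ℂ V] [CompleteSpace V]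
  {S : V →ₗ.[ℂ] V} {m : ℕ}

theorem isRegularFredholm_shift_of_mem_toList_nthRoots (h : IsClosedSymmetric S)
    (hp : nPlus S < ℵ₀) (hm : nMinus S < ℵ₀) (hm₀ : m ≠ 0) {z : ℂ} (hz : z.im ≠ 0) :
    ∀ μ ∈ (nthRoots m z).toList, IsRegularFredholm (shift S μ) := fun _ hμ =>
  h.isRegularFredholm_shift hp hm (im_ne_zero_of_mem_nthRoots hm₀ hz (Multiset.mem_toList.mp hμ))

theorem pow (h : IsClosedSymmetric S) (hp : nPlus S < ℵ₀) (hm : nMinus S < ℵ₀)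
    (hm₀ : m ≠ 0) : IsClosedSymmetric (pmapPow S m) := by
  have hreg := isRegularFredholm_prodShift
    (h.isRegularFredholm_shift_of_mem_toList_nthRoots hp hm hm₀ (z := Complex.I) (by simp))
  rw [← shift_pmapPow_eq_prodShift S hm₀] at hreg
  exact ⟨hreg.dense, isClosed_of_isClosed_shift hreg.isClosed, isSymmP_pmapPow h.symm m⟩

theorem rangeCodim_shift_pmapPow (h : IsClosedSymmetric S) (hp : nPlus S < ℵ₀)
    (hm : nMinus S < ℵ₀) (hm₀ : m ≠ 0) {z : ℂ} (hz : z.im ≠ 0) :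
    rangeCodim (shift (pmapPow S m) z) =
      (nthRoots m z).countP (fun μ => μ.im < 0) * nPlus S +
        (nthRoots m z).countP (fun μ => 0 < μ.im) * nMinus S := by
  have hcodim : ∀ μ ∈ nthRoots m z,
      rangeCodim (shift S μ) = if 0 < μ.im then nMinus S else nPlus S := fun _ hμ =>
    h.rangeCodim_shift_of_im_ne_zero (im_ne_zero_of_mem_nthRoots hm₀ hz hμ)
  rw [shift_pmapPow_eq_prodShift S hm₀, rangeCodim_prodShift
    (h.isRegularFredholm_shift_of_mem_toList_nthRoots hp hm hm₀ hz),
    Multiset.sum_map_toList, Multiset.map_congr rfl hcodim, sum_map_ite_const,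
    countP_not_im_pos_nthRoots hm₀ hz, nsmul_eq_mul, nsmul_eq_mul, add_comm]

theorem nPlus_pmapPow (h : IsClosedSymmetric S) (hp : nPlus S < ℵ₀) (hm : nMinus S < ℵ₀)
    (hm₀ : m ≠ 0) :
    nPlus (pmapPow S m) = ((m + 1) / 2 : ℕ) * nPlus S + (m / 2 : ℕ) * nMinus S := by
  rw [← (h.pow hp hm hm₀).rangeCodim_shift_of_im_neg (μ := -Complex.I) (by simp),
    h.rangeCodim_shift_pmapPow hp hm hm₀ (by simp), countP_nthRoots_neg_I, countP_nthRoots_neg_I]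
  simp only [Complex.conj_im, neg_pos, neg_lt_zero, countP_im_neg_nthRoots_I hm₀,
    countP_im_pos_nthRoots_I hm₀]

theorem nMinus_pmapPow (h : IsClosedSymmetric S) (hp : nPlus S < ℵ₀) (hm : nMinus S < ℵ₀)
    (hm₀ : m ≠ 0) :
    nMinus (pmapPow S m) = (m / 2 : ℕ) * nPlus S + ((m + 1) / 2 : ℕ) * nMinus S := by
  rw [← (h.pow hp hm hm₀).rangeCodim_shift_of_im_pos (μ := Complex.I) (by simp),
    h.rangeCodim_shift_pmapPow hp hm hm₀ (by simp), countP_im_neg_nthRoots_I hm₀,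
    countP_im_pos_nthRoots_I hm₀]

end IsClosedSymmetric

end Powers

theorem powers_equal_deficiency_general (S : H →ₗ.[ℂ] H)
    (hd : Dense (S.domain : Set H)) (hc : S.IsClosed) (hsym : IsSymmP S)
    (hp : nPlus S < ℵ₀) (hm : nMinus S < ℵ₀) (m : ℕ) (hm1 : 1 ≤ m) :
    Dense (((pmapPow S m).domain : Submodule ℂ H) : Set H) ∧
    IsSymmP (pmapPow S m) ∧ (pmapPow S m).IsClosed ∧
    nPlus (pmapPow S m) = ((m + 1) / 2 : ℕ) * nPlus S + (m / 2 : ℕ) * nMinus S ∧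
    nMinus (pmapPow S m) = (m / 2 : ℕ) * nPlus S + ((m + 1) / 2 : ℕ) * nMinus S := by
  have hm₀ : m ≠ 0 := Nat.one_le_iff_ne_zero.mp hm1
  have h : IsClosedSymmetric S := ⟨hd, hc, hsym⟩
  obtain ⟨hd', hc', hsym'⟩ := h.pow hp hm hm₀
  exact ⟨hd', hsym', hc', h.nPlus_pmapPow hp hm hm₀, h.nMinus_pmapPow hp hm hm₀⟩

/-- If a densely defined, closed, symmetric operator `S` has finite equal deficiency
indices `n₊(S) = n₋(S) = n`, then for every `m ≥ 1` the power `S^m` is densely defined,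
symmetric, closed, and `n₊(S^m) = n₋(S^m) = m·n`. -/
theorem powers_equal_deficiency (S : H →ₗ.[ℂ] H)
    (hd : Dense (S.domain : Set H)) (hc : S.IsClosed) (hsym : IsSymmP S)
    (n : ℕ) (hp : nPlus S = (n : Cardinal)) (hm : nMinus S = (n : Cardinal))
    (m : ℕ) (hm1 : 1 ≤ m) :
    Dense (((pmapPow S m).domain : Submodule ℂ H) : Set H) ∧
    IsSymmP (pmapPow S m) ∧ (pmapPow S m).IsClosed ∧
    nPlus (pmapPow S m) = ((m * n : ℕ) : Cardinal) ∧
    nMinus (pmapPow S m) = ((m * n : ℕ) : Cardinal) := by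
  have h := powers_equal_deficiency_general S hd hc hsym (hp ▸ natCast_lt_aleph0)
    (hm ▸ natCast_lt_aleph0) m hm1
  rwa [hp, hm, ← add_mul, ← add_mul, ← Nat.cast_add, ← Nat.cast_add, add_comm (m / 2),
    (by omega : (m + 1) / 2 + m / 2 = m), ← Nat.cast_mul] at h
end
end

section
/- Let T be a densely defined, closed, symmetric operator in a complex Hilbert space H, and suppose that at least one of its deficiency indices n₊(T) = dim ker(T* − i) or n₋(T) = dim ker(T* + i) is finite. Then D := ⋂_{k ∈ ℕ} dom(T^k) is a core for each power T^n, n ∈ ℕ, n ≥ 1; that is, the closure of the restriction of T^n to D equals T^n. In particular, D (and hence each dom(T^k)) is dense in H. -/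
open scoped InnerProductSpace
open Cardinal

noncomputable section

variable {E F G H : Type*}
  [NormedAddCommGroup E] [InnerProductSpace ℂ E] [CompleteSpace E]
  [NormedAddCommGroup F] [InnerProductSpace ℂ F] [CompleteSpace F]
  [NormedAddCommGroup G] [InnerProductSpace ℂ G] [CompleteSpace G]
  [NormedAddCommGroup H] [InnerProductSpace ℂ H] [CompleteSpace H]

/-!
For `z = ± i`, symmetry makes `S = T - z` bounded below, so its range is closed, and one finite
deficiency index makes it of finite codimension for one of the two signs. Both properties pass to
the ranges of all powers of `S`. Since a dense subspace meets a closed subspace of finite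
codimension in a dense subspace of it, `ran Sⁿ ∩ dom S` is dense in `ran Sⁿ`; pulling back along
the bounded below `Sⁿ`, `dom Sⁿ⁺¹` is dense in `dom Sⁿ` for the graph norm. Telescoping with
geometrically decreasing errors (Mittag-Leffler), `⋂ₖ dom Sᵏ = ⋂ₖ dom Tᵏ` is dense in `dom Sⁿ`.
Finally `Tⁿ` is closed: `‖T f‖² ≤ ‖f‖ ‖T² f‖` makes `k ↦ ‖Tᵏ f‖` midpoint convex, hence bounded for
`k ≤ n` by `max ‖f‖ ‖Tⁿ f‖`.
-/

section PowDomain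

variable {R M : Type*} [Ring R] [AddCommGroup M] [Module R M]

/-- The domain of the `n`-th power of the partially defined operator `A.toPMap d`, the restriction
of the everywhere defined `A` to `d`. Passing to a (discontinuous) everywhere defined extension
turns powers of a partially defined operator into powers in the ring `Module.End R M`. -/
def powDomain (A : Module.End R M) (d : Submodule R M) (n : ℕ) : Submodule R M :=
  ⨅ k : Fin n, d.comap (A ^ (k : ℕ))

variable {A : Module.End R M} {d : Submodule R M} {n : ℕ} {f : M}

lemma mem_powDomain : f ∈ powDomain A d n ↔ ∀ k < n, (A ^ k) f ∈ d := by
  simp [powDomain, Submodule.mem_iInf, Fin.forall_iff]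

@[simp]
lemma powDomain_zero (A : Module.End R M) (d : Submodule R M) : powDomain A d 0 = ⊤ := by
  simp [powDomain]

lemma powDomain_antitone (A : Module.End R M) (d : Submodule R M) : Antitone (powDomain A d) :=
  fun _ _ hmn _ hf => mem_powDomain.2 fun k hk => mem_powDomain.1 hf k (hk.trans_le hmn)

lemma mem_powDomain_succ : f ∈ powDomain A d (n + 1) ↔ f ∈ powDomain A d n ∧ (A ^ n) f ∈ d := by
  simp only [mem_powDomain, Nat.forall_lt_succ_right]

lemma mem_powDomain_succ' : f ∈ powDomain A d (n + 1) ↔ f ∈ d ∧ A f ∈ powDomain A d n := by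
  simp only [mem_powDomain, Nat.forall_lt_succ_left, pow_zero, pow_succ, Module.End.one_apply,
    Module.End.mul_apply]

lemma map_pow_powDomain_succ (A : Module.End R M) (d : Submodule R M) (n : ℕ) :
    (powDomain A d (n + 1)).map (A ^ (n + 1)) = ((powDomain A d n).map (A ^ n) ⊓ d).map A := by
  ext y
  simp only [Submodule.mem_map, Submodule.mem_inf, mem_powDomain_succ, pow_succ',
    Module.End.mul_apply]
  grind

end PowDomain

section AddScalar

variable {R M : Type*} [CommRing R] [AddCommGroup M] [Module R M]

lemma powDomain_le_powDomain_add_smul_one (A : Module.End R M) (d : Submodule R M) (z : R) (n : ℕ) :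
    powDomain A d n ≤ powDomain (A + z • 1) d n := by
  induction n with
  | zero => simp
  | succ n ih =>
    intro f hf
    obtain ⟨hfd, hAf⟩ := mem_powDomain_succ'.1 hf
    have hfn : f ∈ powDomain A d n := powDomain_antitone A d n.le_succ hf
    exact mem_powDomain_succ'.2 ⟨hfd, ih (add_mem hAf (Submodule.smul_mem _ z hfn))⟩

lemma powDomain_add_smul_one (A : Module.End R M) (d : Submodule R M) (z : R) :
    powDomain (A + z • 1) d = powDomain A d := by
  ext1 n
  refine le_antisymm ?_ (powDomain_le_powDomain_add_smul_one A d z n)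
  have hA : A + z • 1 + -z • 1 = A := by module
  exact (powDomain_le_powDomain_add_smul_one (A + z • 1) d (-z) n).trans_eq (by rw [hA])

end AddScalar

section ToPMap

lemma mem_graph_toPMap {R M N : Type*} [Ring R] [AddCommGroup M] [Module R M] [AddCommGroup N]
    [Module R N] {A : M →ₗ[R] N} {d : Submodule R M} {p : M × N} :
    p ∈ (A.toPMap d).graph ↔ p.1 ∈ d ∧ A p.1 = p.2 := by
  simp

lemma exists_eq_toPMap {K V W : Type*} [Field K] [AddCommGroup V] [Module K V] [AddCommGroup W]
    [Module K W] (T : V →ₗ.[K] W) : ∃ (A : V →ₗ[K] W) (d : Submodule K V), T = A.toPMap d := by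
  obtain ⟨A, hA⟩ := T.toFun.exists_extend
  exact ⟨A, T.domain, LinearPMap.ext' hA.symm⟩

variable {X Y Z : Type*} [NormedAddCommGroup X] [InnerProductSpace ℂ X] [NormedAddCommGroup Y]
  [InnerProductSpace ℂ Y] [NormedAddCommGroup Z] [InnerProductSpace ℂ Z]

lemma pcomp_toPMap (B : Y →ₗ[ℂ] Z) (e : Submodule ℂ Y) (A : X →ₗ[ℂ] Y) (d : Submodule ℂ X) :
    pcomp (B.toPMap e) (A.toPMap d) = (B ∘ₗ A).toPMap (d ⊓ e.comap A) := by
  refine LinearPMap.ext ?_ fun x hx _ => ?_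
  · ext x
    change x ∈ Submodule.map d.subtype (e.comap (A.toPMap d).toFun) ↔ x ∈ d ∧ A x ∈ e
    exact ⟨fun ⟨y, hy, hyx⟩ => hyx ▸ ⟨y.2, hy⟩, fun h => ⟨⟨x, h.1⟩, h.2, rfl⟩⟩
  · let φ := Submodule.equivMapOfInjective d.subtype d.injective_subtype (e.comap (A.domRestrict d))
    have hφ : ((φ.symm ⟨x, hx⟩ : d) : X) = x := congrArg Subtype.val (φ.apply_symm_apply ⟨x, hx⟩)
    exact congrArg (fun y => B (A y)) hφ

lemma pmapPow_toPMap (A : Module.End ℂ X) (d : Submodule ℂ X) (n : ℕ) :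
    pmapPow (A.toPMap d) n = (A ^ n).toPMap (powDomain A d n) := by
  induction n using Nat.twoStepInduction with
  | zero => rw [powDomain_zero]; rfl
  | one =>
    rw [pow_one, show powDomain A d 1 = d by ext; simp [mem_powDomain]]
    rfl
  | more n _ ih =>
    have hdom : powDomain A d (n + 1) ⊓ d.comap (A ^ (n + 1)) = powDomain A d (n + 2) := by
      ext f
      exact mem_powDomain_succ.symm
    rw [pmapPow, ih, pcomp_toPMap, hdom, pow_succ' A (n + 1)]
    rfl

end ToPMap

section FiniteCodimension

open Submodule

lemma coFG_map_inf {R M N : Type*} [Ring R] [IsNoetherianRing R] [AddCommGroup M] [Module R M]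
    [AddCommGroup N] [Module R N] (f : M →ₗ[R] N) {p q : Submodule R M} (hp : p.CoFG)
    (hq : (q.map f).CoFG) : ((p ⊓ q).map f).CoFG := by
  let Q := (p ⊓ q).map f
  have hker : ((Q.mkQ ∘ₗ f) ∘ₗ q.subtype).ker.CoFG := by
    refine CoFG.of_le (fun x hx => ?_) (CoFG.ker (p.mkQ ∘ₗ q.subtype))
    have hxp : (x : M) ∈ p := by simpa using hx
    exact (Quotient.mk_eq_zero Q).2 (mem_map_of_mem ⟨hxp, x.2⟩)
  have hfg : ((q.map f).map Q.mkQ).FG := by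
    rwa [← map_comp, ← range_subtype q, ← LinearMap.range_comp, range_fg_iff_ker_cofg]
  have : Module.Finite R ((q.map f).map Q.mkQ) := Module.Finite.iff_fg.2 hfg
  have : Module.Finite R ((N ⧸ Q) ⧸ (q.map f).map Q.mkQ) :=
    Module.Finite.equiv (quotientQuotientEquivQuotient Q (q.map f) (map_mono inf_le_right)).symm
  exact Module.Finite.of_submodule_quotient ((q.map f).map Q.mkQ)

lemma coFG_map_pow {R M : Type*} [Ring R] [IsNoetherianRing R] [AddCommGroup M] [Module R M]
    {S : Module.End R M} {d : Submodule R M} (hfin : (d.map S).CoFG) (n : ℕ) :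
    ((powDomain S d n).map (S ^ n)).CoFG := by
  induction n with
  | zero => simp [Module.End.one_eq_id]
  | succ n ih =>
    rw [map_pow_powDomain_succ]
    exact coFG_map_inf S ih hfin

lemma le_topologicalClosure_inf_of_dense {𝕜 X : Type*} [NontriviallyNormedField 𝕜]
    [CompleteSpace 𝕜] [AddCommGroup X] [Module 𝕜 X] [TopologicalSpace X] [IsTopologicalAddGroup X]
    [ContinuousSMul 𝕜 X] {p d : Submodule 𝕜 X} (hp : IsClosed (p : Set X)) (hpfin : p.CoFG)
    (hd : Dense (d : Set X)) : p ≤ (p ⊓ d).topologicalClosure := by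
  have hdp : Codisjoint d p := by
    have hclosed : IsClosed ((d ⊔ p : Submodule 𝕜 X) : Set X) :=
      isClosed_mono_of_finiteDimensional_quotient hp le_sup_right
    have hdense : Dense ((d ⊔ p : Submodule 𝕜 X) : Set X) := hd.mono (le_sup_left (a := d))
    rw [codisjoint_iff, ← hclosed.submodule_topologicalClosure_eq,
      dense_iff_topologicalClosure_eq_top.1 hdense]
  obtain ⟨q, hqd, hqp⟩ := hdp.exists_isCompl
  have hpq : IsTopCompl p q := hqp.symm.isTopCompl_of_finiteDimensional_quotient hp
  intro x hx
  have hmaps : Set.MapsTo (p.projectionL q hpq) d (p ⊓ d : Submodule 𝕜 X) := by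
    intro y hy
    refine ⟨projectionL_apply_mem hpq y, ?_⟩
    rw [projectionL_eq_self_sub_projectionL hpq.symm]
    exact d.sub_mem hy (hqd (projectionL_apply_mem hpq.symm y))
  have := map_mem_closure (p.projectionL q hpq).continuous (hd x) hmaps
  rwa [projectionL_apply_left hpq ⟨x, hx⟩] at this

end FiniteCodimension

section ClosedOperator

open Filter Topology NNReal

variable {𝕜 X Y : Type*} [NontriviallyNormedField 𝕜] [NormedAddCommGroup X] [NormedSpace 𝕜 X]
  [NormedAddCommGroup Y] [NormedSpace 𝕜 Y]

lemma isClosed_toPMap_sub_smul_one {A : Module.End 𝕜 X} {d : Submodule 𝕜 X}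
    (hcl : (A.toPMap d).IsClosed) (z : 𝕜) : ((A - z • 1).toPMap d).IsClosed := by
  have hgraph : (((A - z • 1).toPMap d).graph : Set (X × X)) =
      (fun p : X × X => (p.1, p.2 + z • p.1)) ⁻¹' (A.toPMap d).graph := by
    ext p
    simp [sub_eq_iff_eq_add]
  rw [LinearPMap.IsClosed, hgraph]
  exact hcl.preimage (by fun_prop)

lemma mem_and_apply_eq_of_tendsto {A : X →ₗ[𝕜] Y} {d : Submodule 𝕜 X}
    (hcl : (A.toPMap d).IsClosed) {ι : Type*} {l : Filter ι} [l.NeBot] {x : ι → X} {a : X} {b : Y}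
    (hx : ∀ᶠ i in l, x i ∈ d) (ha : Tendsto x l (𝓝 a)) (hb : Tendsto (fun i => A (x i)) l (𝓝 b)) :
    a ∈ d ∧ A a = b :=
  mem_graph_toPMap.1 <| hcl.mem_of_tendsto (ha.prodMk_nhds hb) <|
    hx.mono fun _ hi => mem_graph_toPMap.2 ⟨hi, rfl⟩

lemma mem_powDomain_and_pow_apply_eq_of_tendsto {A : Module.End 𝕜 X} {d : Submodule 𝕜 X}
    (hcl : (A.toPMap d).IsClosed) {ι : Type*} {l : Filter ι} [l.NeBot] {x : ι → X} {g : ℕ → X}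
    {n : ℕ} (hx : ∀ᶠ i in l, x i ∈ powDomain A d n)
    (hg : ∀ k ≤ n, Tendsto (fun i => (A ^ k) (x i)) l (𝓝 (g k))) :
    g 0 ∈ powDomain A d n ∧ ∀ k ≤ n, (A ^ k) (g 0) = g k := by
  induction n with
  | zero => simp
  | succ n ih =>
    obtain ⟨hmem, heq⟩ := ih (hx.mono fun _ hi => (mem_powDomain_succ.1 hi).1)
      fun k hk => hg k (hk.trans n.le_succ)
    obtain ⟨hd, hnext⟩ := mem_and_apply_eq_of_tendsto hcl
      (hx.mono fun _ hi => (mem_powDomain_succ.1 hi).2) (hg n n.le_succ)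
      (by simpa only [pow_succ', Module.End.mul_apply] using hg (n + 1) le_rfl)
    refine ⟨mem_powDomain_succ.2 ⟨hmem, by rwa [heq n le_rfl]⟩, fun k hk => ?_⟩
    rcases hk.lt_or_eq with hk | rfl
    · exact heq k (Nat.lt_succ_iff.1 hk)
    · rw [pow_succ', Module.End.mul_apply, heq n le_rfl, hnext]

lemma isClosed_map_inf [CompleteSpace X] [CompleteSpace Y] {A : X →ₗ[𝕜] Y} {d : Submodule 𝕜 X}
    (hcl : (A.toPMap d).IsClosed) {K : ℝ≥0} (hK : ∀ x ∈ d, ‖x‖ ≤ K * ‖A x‖) {p : Submodule 𝕜 X}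
    (hp : IsClosed (p : Set X)) : IsClosed ((p ⊓ d).map A : Set Y) := by
  let Γ : Submodule 𝕜 (X × Y) := (A.toPMap d).graph ⊓ p.comap (LinearMap.fst 𝕜 X Y)
  have hΓ : IsClosed (Γ : Set (X × Y)) := hcl.inter (hp.preimage continuous_fst)
  have : CompleteSpace Γ := hΓ.completeSpace_coe
  let φ : Γ →L[𝕜] Y := (ContinuousLinearMap.snd 𝕜 X Y).comp Γ.subtypeL
  have hφ : AntilipschitzWith (max K 1) φ := by
    refine AddMonoidHomClass.antilipschitz_of_bound φ fun ⟨⟨x, y⟩, hxy, _⟩ => ?_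
    obtain ⟨hx, rfl⟩ : x ∈ d ∧ A x = y := mem_graph_toPMap.1 hxy
    rw [NNReal.coe_max, max_mul_of_nonneg _ _ (norm_nonneg _)]
    exact max_le_max (hK x hx) (one_mul ‖A x‖).ge
  convert hφ.isClosed_range φ.uniformContinuous
  ext y
  constructor
  · rintro ⟨x, ⟨hxp, hxd⟩, rfl⟩
    exact ⟨⟨(x, A x), mem_graph_toPMap.2 ⟨hxd, rfl⟩, hxp⟩, rfl⟩
  · rintro ⟨⟨⟨x, y⟩, hxy, hxp⟩, rfl⟩
    exact ⟨x, ⟨hxp, (mem_graph_toPMap.1 hxy).1⟩, (mem_graph_toPMap.1 hxy).2⟩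

lemma isClosed_toPMap_pow [CompleteSpace X] {A : Module.End 𝕜 X} {d : Submodule 𝕜 X}
    (hcl : (A.toPMap d).IsClosed) {n : ℕ} {C : ℝ≥0}
    (hC : ∀ f ∈ powDomain A d n, ∀ k ≤ n, ‖(A ^ k) f‖ ≤ C * max ‖f‖ ‖(A ^ n) f‖) :
    ((A ^ n).toPMap (powDomain A d n)).IsClosed := by
  refine IsSeqClosed.isClosed fun p q hp hpq => ?_
  simp only [SetLike.mem_coe, mem_graph_toPMap] at hp ⊢
  have hlim (k : ℕ) (hk : k ≤ n) : ∃ g, Tendsto (fun j => (A ^ k) (p j).1) atTop (𝓝 g) := by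
    have hlip : LipschitzOnWith C (fun p : X × X => (A ^ k) p.1) (Set.range p) := by
      refine LipschitzOnWith.of_dist_le_mul ?_
      rintro _ ⟨i, rfl⟩ _ ⟨j, rfl⟩
      simpa only [dist_eq_norm, map_sub, (hp _).2, Prod.norm_def, Prod.fst_sub, Prod.snd_sub] using
        hC _ (sub_mem (hp i).1 (hp j).1) k hk
    exact cauchySeq_tendsto_of_complete <|
      hlip.cauchySeq_comp hpq.cauchySeq (Set.range_subset_iff.2 Set.mem_range_self)
  choose! g hg using hlim
  have hfst : g 0 = q.1 := tendsto_nhds_unique (hg 0 n.zero_le) hpq.fst_nhds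
  have hsnd : g n = q.2 :=
    tendsto_nhds_unique (hg n le_rfl) (by simpa only [(hp _).2] using hpq.snd_nhds)
  obtain ⟨hmem, heq⟩ :=
    mem_powDomain_and_pow_apply_eq_of_tendsto hcl (.of_forall fun j => (hp j).1) hg
  rw [← hfst, ← hsnd]
  exact ⟨hmem, heq n le_rfl⟩

end ClosedOperator

section MittagLeffler

open Filter Topology

variable {𝕜 X : Type*} [NontriviallyNormedField 𝕜] [NormedAddCommGroup X] [NormedSpace 𝕜 X]
  {S : Module.End 𝕜 X} {d : Submodule 𝕜 X}

lemma exists_seq_mem_powDomain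
    (hstep : ∀ n, ∀ f ∈ powDomain S d n, ∀ ε > 0,
      ∃ g ∈ powDomain S d (n + 1), ∀ k ≤ n, dist ((S ^ k) f) ((S ^ k) g) ≤ ε)
    {n : ℕ} {f : X} (hf : f ∈ powDomain S d n) {ε : ℝ} (hε : 0 < ε) :
    ∃ F : ℕ → X, F 0 = f ∧ (∀ j, F j ∈ powDomain S d (n + j)) ∧
      ∀ j, ∀ k ≤ n + j, dist ((S ^ k) (F j)) ((S ^ k) (F (j + 1))) ≤ ε / 2 / 2 ^ j := by
  choose! next hnext_mem hnext_dist using hstep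
  let F : ℕ → X := Nat.rec f fun j y => next (n + j) y (ε / 2 / 2 ^ j)
  have hF (j : ℕ) : F j ∈ powDomain S d (n + j) := by
    induction j with
    | zero => exact hf
    | succ j ih => exact hnext_mem _ _ ih _ (by positivity)
  exact ⟨F, rfl, hF, fun j => hnext_dist _ _ (hF j) _ (by positivity)⟩

lemma exists_mem_iInf_powDomain [CompleteSpace X] (hcl : (S.toPMap d).IsClosed)
    (hstep : ∀ n, ∀ f ∈ powDomain S d n, ∀ ε > 0,
      ∃ g ∈ powDomain S d (n + 1), ∀ k ≤ n, dist ((S ^ k) f) ((S ^ k) g) ≤ ε)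
    {n : ℕ} {f : X} (hf : f ∈ powDomain S d n) {ε : ℝ} (hε : 0 < ε) :
    ∃ g ∈ ⨅ m, powDomain S d m, ∀ k ≤ n, dist ((S ^ k) f) ((S ^ k) g) ≤ ε := by
  obtain ⟨F, rfl, hF, hdist⟩ := exists_seq_mem_powDomain hstep hf hε
  have hlim (k : ℕ) : ∃ g, Tendsto (fun j => (S ^ k) (F j)) atTop (𝓝 g) := by
    refine cauchySeq_tendsto_of_complete <| (cauchySeq_shift k).1 <|
      cauchySeq_of_le_geometric_two (C := ε) fun j => ?_
    rw [Nat.add_right_comm]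
    refine (hdist (j + k) k (by lia)).trans ?_
    gcongr
    exacts [one_le_two, j.le_add_right k]
  choose g hg using hlim
  have hmem (m : ℕ) : F m ∈ powDomain S d m := powDomain_antitone S d (by lia) (hF m)
  have hgm (m : ℕ) : g 0 ∈ powDomain S d m ∧ ∀ k ≤ m, (S ^ k) (g 0) = g k :=
    mem_powDomain_and_pow_apply_eq_of_tendsto hcl
      (eventually_atTop.2 ⟨m, fun j hj => powDomain_antitone S d hj (hmem j)⟩) fun k _ => hg k
  refine ⟨g 0, (Submodule.mem_iInf _).2 fun m => (hgm m).1, fun k hk => ?_⟩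
  rw [(hgm k).2 k le_rfl]
  exact dist_le_of_le_geometric_two_of_tendsto₀ (fun j => hdist j k (by lia)) (hg k)

end MittagLeffler

section BoundedBelow

open NNReal

variable {𝕜 X : Type*} [NontriviallyNormedField 𝕜] [NormedAddCommGroup X] [NormedSpace 𝕜 X]
  {S : Module.End 𝕜 X} {d : Submodule 𝕜 X} {K : ℝ≥0}

lemma norm_pow_apply_le_of_bounded_below (hK : ∀ x ∈ d, ‖x‖ ≤ K * ‖S x‖) {n : ℕ} {f : X}
    (hf : f ∈ powDomain S d n) {k : ℕ} (hk : k ≤ n) :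
    ‖(S ^ k) f‖ ≤ max (K : ℝ) 1 ^ n * ‖(S ^ n) f‖ := by
  induction n, hk using Nat.le_induction with
  | base => exact le_mul_of_one_le_left (norm_nonneg _) (one_le_pow₀ (le_max_right _ _))
  | succ n _ ih =>
    obtain ⟨hfn, hd⟩ := mem_powDomain_succ.1 hf
    have hstep : ‖(S ^ n) f‖ ≤ max (K : ℝ) 1 * ‖(S ^ (n + 1)) f‖ := by
      rw [pow_succ', Module.End.mul_apply]
      exact (hK _ hd).trans (by gcongr; exact le_max_left _ _)
    calc ‖(S ^ k) f‖ ≤ max (K : ℝ) 1 ^ n * ‖(S ^ n) f‖ := ih hfn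
      _ ≤ max (K : ℝ) 1 ^ n * (max (K : ℝ) 1 * ‖(S ^ (n + 1)) f‖) := by gcongr
      _ = max (K : ℝ) 1 ^ (n + 1) * ‖(S ^ (n + 1)) f‖ := by rw [pow_succ (max _ _), mul_assoc]

lemma isClosed_map_pow [CompleteSpace X] (hcl : (S.toPMap d).IsClosed)
    (hK : ∀ x ∈ d, ‖x‖ ≤ K * ‖S x‖) (n : ℕ) :
    IsClosed ((powDomain S d n).map (S ^ n) : Set X) := by
  induction n with
  | zero => simp [Module.End.one_eq_id]
  | succ n ih =>
    rw [map_pow_powDomain_succ]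
    exact isClosed_map_inf hcl hK ih

variable [CompleteSpace 𝕜] [CompleteSpace X]

lemma exists_mem_powDomain_succ (hd : Dense (d : Set X)) (hcl : (S.toPMap d).IsClosed)
    (hK : ∀ x ∈ d, ‖x‖ ≤ K * ‖S x‖) (hfin : (d.map S).CoFG) (n : ℕ) (f : X)
    (hf : f ∈ powDomain S d n) (ε : ℝ) (hε : 0 < ε) :
    ∃ g ∈ powDomain S d (n + 1), ∀ k ≤ n, dist ((S ^ k) f) ((S ^ k) g) ≤ ε := by
  set M : ℝ := max K 1
  have : 0 < M := lt_max_of_lt_right one_pos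
  have hSf : (S ^ n) f ∈ closure ((powDomain S d n).map (S ^ n) ⊓ d : Submodule 𝕜 X) :=
    le_topologicalClosure_inf_of_dense (isClosed_map_pow hcl hK n) (coFG_map_pow hfin n) hd
      (Submodule.mem_map_of_mem hf)
  obtain ⟨_, ⟨⟨g, hg, rfl⟩, hgd⟩, hdist⟩ := Metric.mem_closure_iff.1 hSf (ε / M ^ n) (by positivity)
  refine ⟨g, mem_powDomain_succ.2 ⟨hg, hgd⟩, fun k hk => ?_⟩
  calc dist ((S ^ k) f) ((S ^ k) g) = ‖(S ^ k) (f - g)‖ := by rw [dist_eq_norm, map_sub]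
    _ ≤ M ^ n * ‖(S ^ n) (f - g)‖ := norm_pow_apply_le_of_bounded_below hK (sub_mem hf hg) hk
    _ = M ^ n * dist ((S ^ n) f) ((S ^ n) g) := by rw [dist_eq_norm, map_sub]
    _ ≤ M ^ n * (ε / M ^ n) := by gcongr
    _ = ε := mul_div_cancel₀ ε (by positivity)

end BoundedBelow

section Shift

open NNReal

variable {𝕜 X : Type*} [NontriviallyNormedField 𝕜] [NormedAddCommGroup X] [NormedSpace 𝕜 X]

lemma norm_pow_add_smul_one_apply_le (S : Module.End 𝕜 X) (z : 𝕜) {n : ℕ} {f : X} {ε : ℝ}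
    (hf : ∀ k ≤ n, ‖(S ^ k) f‖ ≤ ε) : ‖((S + z • 1) ^ n) f‖ ≤ (1 + ‖z‖) ^ n * ε := by
  induction n generalizing f ε with
  | zero => simpa using hf 0 le_rfl
  | succ n ih =>
    have hshift : ∀ k ≤ n, ‖(S ^ k) ((S + z • 1) f)‖ ≤ (1 + ‖z‖) * ε := by
      intro k hk
      have hexp : (S ^ k) ((S + z • 1) f) = (S ^ (k + 1)) f + z • (S ^ k) f := by
        simp [pow_succ]
      calc ‖(S ^ k) ((S + z • 1) f)‖ ≤ ‖(S ^ (k + 1)) f‖ + ‖z‖ * ‖(S ^ k) f‖ := by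
            rw [hexp, ← norm_smul]
            exact norm_add_le _ _
        _ ≤ ε + ‖z‖ * ε := by gcongr; exacts [hf _ (by lia), hf _ (by lia)]
        _ = (1 + ‖z‖) * ε := by ring
    rw [pow_succ, Module.End.mul_apply, pow_succ, mul_assoc]
    exact ih hshift

variable [CompleteSpace 𝕜] [CompleteSpace X] {A : Module.End 𝕜 X} {d : Submodule 𝕜 X} {z : 𝕜}
  {K : ℝ≥0}

lemma exists_mem_iInf_powDomain_of_bounded_below (hd : Dense (d : Set X))
    (hcl : (A.toPMap d).IsClosed) (hK : ∀ x ∈ d, ‖x‖ ≤ K * ‖A x - z • x‖)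
    (hfin : (d.map (A - z • 1)).CoFG) {n : ℕ} {f : X} (hf : f ∈ powDomain A d n) {ε : ℝ}
    (hε : 0 < ε) :
    ∃ g ∈ ⨅ m, powDomain A d m, ∀ k ≤ n, dist ((A ^ k) f) ((A ^ k) g) ≤ ε := by
  set S : Module.End 𝕜 X := A - z • 1
  have hA : A = S + z • 1 := (sub_add_cancel A _).symm
  have hpow : powDomain A d = powDomain S d := by rw [hA, powDomain_add_smul_one]
  rw [hpow] at hf ⊢
  set M : ℝ := 1 + ‖z‖
  have hM : 1 ≤ M := le_add_of_nonneg_right (norm_nonneg z)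
  have hclS : (S.toPMap d).IsClosed := isClosed_toPMap_sub_smul_one hcl z
  obtain ⟨g, hg, hfg⟩ := exists_mem_iInf_powDomain hclS
    (exists_mem_powDomain_succ hd hclS hK hfin) hf (ε := ε / M ^ n) (by positivity)
  simp only [dist_eq_norm, ← map_sub] at hfg ⊢
  refine ⟨g, hg, fun k hk => ?_⟩
  calc ‖(A ^ k) (f - g)‖ ≤ M ^ k * (ε / M ^ n) := by
        rw [hA]
        exact norm_pow_add_smul_one_apply_le S z fun j hj => hfg j (hj.trans hk)
    _ ≤ M ^ n * (ε / M ^ n) := by gcongr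
    _ = ε := mul_div_cancel₀ ε (by positivity)

lemma dense_iInf_powDomain (hd : Dense (d : Set X))
    (hcl : (A.toPMap d).IsClosed) (hK : ∀ x ∈ d, ‖x‖ ≤ K * ‖A x - z • x‖)
    (hfin : (d.map (A - z • 1)).CoFG) : Dense ((⨅ m, powDomain A d m : Submodule 𝕜 X) : Set X) := by
  intro f
  refine Metric.mem_closure_iff.2 fun ε hε => ?_
  obtain ⟨g, hg, hfg⟩ := exists_mem_iInf_powDomain_of_bounded_below (n := 0) (f := f) hd hcl hK hfin
    (by simp) (half_pos hε)
  exact ⟨g, hg, (by simpa using hfg 0 le_rfl : dist f g ≤ ε / 2).trans_lt (half_lt_self hε)⟩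

lemma graph_pow_le_topologicalClosure (hd : Dense (d : Set X))
    (hcl : (A.toPMap d).IsClosed) (hK : ∀ x ∈ d, ‖x‖ ≤ K * ‖A x - z • x‖)
    (hfin : (d.map (A - z • 1)).CoFG) (n : ℕ) :
    ((A ^ n).toPMap (powDomain A d n)).graph ≤
      (((A ^ n).toPMap (powDomain A d n)).graph ⊓
        (⨅ m, powDomain A d m).prod ⊤).topologicalClosure := by
  rintro ⟨f, h⟩ hfh
  obtain ⟨hf, rfl⟩ : f ∈ powDomain A d n ∧ (A ^ n) f = h := mem_graph_toPMap.1 hfh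
  refine Metric.mem_closure_iff.2 fun ε hε => ?_
  obtain ⟨g, hg, hfg⟩ := exists_mem_iInf_powDomain_of_bounded_below hd hcl hK hfin hf (half_pos hε)
  refine ⟨(g, (A ^ n) g),
    ⟨mem_graph_toPMap.2 ⟨(Submodule.mem_iInf _).1 hg n, rfl⟩, hg, Submodule.mem_top⟩, ?_⟩
  have hdist : dist (f, (A ^ n) f) (g, (A ^ n) g) ≤ ε / 2 :=
    max_le (by simpa using hfg 0 n.zero_le) (hfg n le_rfl)
  exact hdist.trans_lt (half_lt_self hε)

end Shift

lemma le_max_of_two_mul_le_add {R : Type*} [CommRing R] [LinearOrder R] [IsStrictOrderedRing R]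
    {a : ℕ → R} {n : ℕ} (ha : ∀ k, k + 2 ≤ n → 2 * a (k + 1) ≤ a k + a (k + 2)) :
    ∀ k ≤ n, a k ≤ max (a 0) (a n) := by
  induction n with
  | zero => simp
  | succ n ih =>
    have hmax := ih fun k hk => ha k (by lia)
    suffices hn : a n ≤ max (a 0) (a (n + 1)) by
      intro k hk
      rcases hk.lt_or_eq with hk | rfl
      · exact (hmax k (Nat.lt_succ_iff.1 hk)).trans (max_le (le_max_left _ _) hn)
      · exact le_max_right _ _
    rcases n with _ | n
    · exact le_max_left _ _
    · have hconv := ha n le_rfl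
      have hprev := hmax n n.le_succ
      grind

section Symmetric

variable {X : Type*} [NormedAddCommGroup X] [InnerProductSpace ℂ X]

lemma norm_apply_sq_le_of_isSymmP {A : Module.End ℂ X} {d : Submodule ℂ X}
    (hsym : IsSymmP (A.toPMap d)) {f : X} (hf : f ∈ d) (hAf : A f ∈ d) :
    ‖A f‖ ^ 2 ≤ ‖f‖ * ‖A (A f)‖ :=
  calc ‖A f‖ ^ 2 = ‖⟪A f, A f⟫_ℂ‖ := by simp [inner_self_eq_norm_sq_to_K]
    _ = ‖⟪f, A (A f)⟫_ℂ‖ := congrArg norm (hsym ⟨f, hf⟩ ⟨A f, hAf⟩)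
    _ ≤ ‖f‖ * ‖A (A f)‖ := norm_inner_le_norm _ _

lemma norm_pow_apply_le_max_of_isSymmP {A : Module.End ℂ X} {d : Submodule ℂ X}
    (hsym : IsSymmP (A.toPMap d)) {n : ℕ} {f : X} (hf : f ∈ powDomain A d n) {k : ℕ} (hk : k ≤ n) :
    ‖(A ^ k) f‖ ≤ max ‖f‖ ‖(A ^ n) f‖ := by
  refine le_max_of_two_mul_le_add (a := fun k => ‖(A ^ k) f‖) (fun j hj => ?_) k hk
  have hsq := norm_apply_sq_le_of_isSymmP hsym (mem_powDomain.1 hf j (by lia)) (by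
    simpa only [pow_succ', Module.End.mul_apply] using mem_powDomain.1 hf (j + 1) (by lia))
  simp only [pow_succ', Module.End.mul_apply]
  nlinarith [sq_nonneg (‖(A ^ j) f‖ - ‖A (A ((A ^ j) f))‖), norm_nonneg ((A ^ j) f),
    norm_nonneg (A (A ((A ^ j) f)))]

lemma isClosed_toPMap_pow_of_isSymmP [CompleteSpace X] {A : Module.End ℂ X} {d : Submodule ℂ X}
    (hcl : (A.toPMap d).IsClosed) (hsym : IsSymmP (A.toPMap d)) (n : ℕ) :
    ((A ^ n).toPMap (powDomain A d n)).IsClosed :=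
  isClosed_toPMap_pow hcl (C := 1) fun _ hf _ hk => by
    simpa using norm_pow_apply_le_max_of_isSymmP hsym hf hk

lemma abs_im_mul_norm_le_of_isSymmP {T : X →ₗ.[ℂ] X} (hsym : IsSymmP T) (z : ℂ) (f : T.domain) :
    |z.im| * ‖(f : X)‖ ≤ ‖T f - z • (f : X)‖ := by
  have hreal : (⟪(f : X), T f⟫_ℂ).im = 0 := by
    rw [← Complex.conj_eq_iff_im, inner_conj_symm]
    exact hsym f f
  have him : (⟪(f : X), T f - z • (f : X)⟫_ℂ).im = -(z.im * ‖(f : X)‖ ^ 2) := by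
    rw [inner_sub_right, inner_smul_right, inner_self_eq_norm_sq_to_K, Complex.sub_im, hreal]
    simp [← Complex.ofReal_pow]
  have hle : |z.im| * ‖(f : X)‖ * ‖(f : X)‖ ≤ ‖T f - z • (f : X)‖ * ‖(f : X)‖ :=
    calc |z.im| * ‖(f : X)‖ * ‖(f : X)‖ = |(⟪(f : X), T f - z • (f : X)⟫_ℂ).im| := by
          rw [him, abs_neg, abs_mul, abs_sq, sq, mul_assoc]
      _ ≤ ‖⟪(f : X), T f - z • (f : X)⟫_ℂ‖ := Complex.abs_im_le_norm _
      _ ≤ ‖T f - z • (f : X)‖ * ‖(f : X)‖ := by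
          rw [mul_comm]
          exact norm_inner_le_norm _ _
  rcases (norm_nonneg (f : X)).eq_or_lt with hf | hf
  · simp [← hf]
  · exact le_of_mul_le_mul_right hle hf

end Symmetric

section Deficiency

open ComplexConjugate

variable {X : Type*} [NormedAddCommGroup X] [InnerProductSpace ℂ X] [CompleteSpace X]

lemma orthogonal_map_sub_smul_one_le {A : Module.End ℂ X} {d : Submodule ℂ X}
    (hd : Dense (d : Set X)) (z : ℂ) :
    (d.map (A - z • 1))ᗮ ≤
      (kerAt (A.toPMap d).adjoint (conj z)).map (A.toPMap d).adjoint.domain.subtype := by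
  intro y hy
  have hadj (x : (A.toPMap d).domain) : ⟪conj z • y, (x : X)⟫_ℂ = ⟪y, A.toPMap d x⟫_ℂ := by
    have h : ⟪y, A x - z • (x : X)⟫_ℂ = 0 :=
      (Submodule.mem_orthogonal' _ y).1 hy _ ⟨x, x.2, rfl⟩
    rw [inner_sub_right, inner_smul_right, sub_eq_zero] at h
    rw [inner_smul_left, Complex.conj_conj]
    exact h.symm
  let y' : (A.toPMap d).adjoint.domain :=
    ⟨y, LinearPMap.mem_adjoint_domain_of_exists y ⟨conj z • y, hadj⟩⟩
  have hy' : (A.toPMap d).adjoint y' = conj z • y := LinearPMap.adjoint_apply_eq hd y' hadj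
  exact ⟨y', sub_eq_zero.2 hy', rfl⟩

lemma coFG_map_sub_smul_one {A : Module.End ℂ X} {d : Submodule ℂ X} (hd : Dense (d : Set X))
    {z : ℂ} (hrange : IsClosed (d.map (A - z • 1) : Set X))
    (hfin : Module.rank ℂ (kerAt (A.toPMap d).adjoint (conj z)) < ℵ₀) :
    (d.map (A - z • 1)).CoFG := by
  have : CompleteSpace (d.map (A - z • 1)) := hrange.completeSpace_coe
  have : FiniteDimensional ℂ (kerAt (A.toPMap d).adjoint (conj z)) :=
    Module.rank_lt_aleph0_iff.1 hfin
  have : FiniteDimensional ℂ (d.map (A - z • 1))ᗮ :=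
    Submodule.finiteDimensional_of_le (orthogonal_map_sub_smul_one_le hd z)
  exact Module.Finite.equiv
    (Submodule.quotientEquivOfIsCompl _ _ (Submodule.isCompl_orthogonal _)).symm

end Deficiency

theorem schmuedgen_core_general {X : Type*} [NormedAddCommGroup X] [InnerProductSpace ℂ X]
    [CompleteSpace X] (T : X →ₗ.[ℂ] X) (hd : Dense (T.domain : Set X)) (hc : T.IsClosed)
    (hsym : IsSymmP T) {z : ℂ} {K : NNReal}
    (hK : ∀ f : T.domain, ‖(f : X)‖ ≤ K * ‖T f - z • (f : X)‖)
    (hfin : Module.rank ℂ (kerAt T.adjoint (starRingEnd ℂ z)) < ℵ₀) :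
    (∀ n : ℕ, 1 ≤ n →
      ((pmapPow T n).graph ⊓
        (⨅ k : ℕ, (pmapPow T (k + 1)).domain).prod (⊤ : Submodule ℂ X)).topologicalClosure
        = (pmapPow T n).graph) ∧
    Dense (((⨅ k : ℕ, (pmapPow T (k + 1)).domain : Submodule ℂ X)) : Set X) ∧
    (∀ k : ℕ, 1 ≤ k → Dense (((pmapPow T k).domain : Submodule ℂ X) : Set X)) := by
  obtain ⟨A, d, rfl⟩ := exists_eq_toPMap T
  have hK' : ∀ x ∈ d, ‖x‖ ≤ K * ‖A x - z • x‖ := fun x hx => hK ⟨x, hx⟩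
  have hrange : IsClosed (d.map (A - z • 1) : Set X) := by
    simpa using isClosed_map_inf (p := ⊤) (isClosed_toPMap_sub_smul_one hc z) hK' isClosed_univ
  have hcofin : (d.map (A - z • 1)).CoFG := coFG_map_sub_smul_one hd hrange hfin
  have hdense := dense_iInf_powDomain hd hc hK' hcofin
  have hD : ⨅ k, powDomain A d (k + 1) = ⨅ k, powDomain A d k :=
    (powDomain_antitone A d).iInf_nat_add 1
  simp only [pmapPow_toPMap, LinearMap.toPMap_domain, hD]
  refine ⟨fun n _ => le_antisymm ?_ ?_, hdense, fun k _ => hdense.mono (iInf_le (powDomain A d) k)⟩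
  · exact Submodule.topologicalClosure_minimal _ inf_le_left
      (isClosed_toPMap_pow_of_isSymmP hc hsym n)
  · exact graph_pow_le_topologicalClosure hd hc hK' hcofin n

/-- Schmüdgen's theorem: if `T` is densely defined, closed, symmetric, and at least one
deficiency index is finite, then `D = ⋂_k dom(T^k)` is a core for each `T^n`, `n ≥ 1`
(the closure of the graph of `T^n` restricted to `D` is the graph of `T^n`); in
particular `D`, and hence each `dom(T^k)`, is dense. -/
theorem schmuedgen_core (T : H →ₗ.[ℂ] H)
    (hd : Dense (T.domain : Set H)) (hc : T.IsClosed) (hsym : IsSymmP T)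
    (hfin : nPlus T < ℵ₀ ∨ nMinus T < ℵ₀) :
    (∀ n : ℕ, 1 ≤ n →
      ((pmapPow T n).graph ⊓
        (⨅ k : ℕ, (pmapPow T (k + 1)).domain).prod (⊤ : Submodule ℂ H)).topologicalClosure
        = (pmapPow T n).graph) ∧
    Dense (((⨅ k : ℕ, (pmapPow T (k + 1)).domain : Submodule ℂ H)) : Set H) ∧
    (∀ k : ℕ, 1 ≤ k → Dense (((pmapPow T k).domain : Submodule ℂ H) : Set H)) := by
  rcases hfin with h | h
  · exact schmuedgen_core_general T hd hc hsym (z := -Complex.I) (K := 1)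
      (by simpa using abs_im_mul_norm_le_of_isSymmP hsym (-Complex.I))
      (by rw [map_neg, Complex.conj_I, neg_neg]; exact h)
  · exact schmuedgen_core_general T hd hc hsym (z := Complex.I) (K := 1)
      (by simpa using abs_im_mul_norm_le_of_isSymmP hsym Complex.I)
      (by rw [Complex.conj_I]; exact h)
end
end
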